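/- arXiv:2211.07033 — 3 statements merged into one kernel-verified Lean document; each statement's English description precedes it below -/
import Mathlib

section
/- For every acyclically oriented graph H⃗ with m₂(H⃗) > 1/2, there are constants B and β > 0 such that if p = p(n) ≥ B·n^{-1/m₂(H⃗)}, then for all sufficiently large n, P(G(n,p) ↛ H⃗) ≤ e^{−β·p·n²}. -/
open Classical in
/-- The probability that the binomial random graph `G(n,p)` satisfies the property `Q`. -/
noncomputable def probGnp (n : ℕ) (p : ℝ) (Q : SimpleGraph (Fin n) → Prop) : ℝ :=
  ∑ G : SimpleGraph (Fin n),
    if Q G then p ^ G.edgeSet.ncard * (1 - p) ^ (n.choose 2 - G.edgeSet.ncard) else 0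
/-- `o` is an orientation of the simple graph `G`: every edge of `G` is assigned
exactly one direction, and there are no other arcs. -/
def IsOrientation {α : Type*} (G : SimpleGraph α) (o : α → α → Prop) : Prop :=
  (∀ u v, o u v → G.Adj u v) ∧ ∀ u v, G.Adj u v → (o u v ↔ ¬ o v u)

/-- The digraph `o` contains a (not necessarily induced) copy of the oriented graph `H`
as a subdigraph. -/
def HasCopy {α β : Type*} (o : α → α → Prop) (H : β → β → Prop) : Prop :=
  ∃ f : β → α, Function.Injective f ∧ ∀ a b, H a b → o (f a) (f b)

/-- `G → H⃗`: every orientation of `G` contains a copy of `H`. -/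
def Arrows {α β : Type*} (G : SimpleGraph α) (H : β → β → Prop) : Prop :=
  ∀ o : α → α → Prop, IsOrientation G o → HasCopy o H
/-- The 2-density associated to a (sub)graph with `v` vertices and `e` edges:
`(e-1)/(v-2)` if `v ≥ 3`, `1/2` for a single edge, and `0` otherwise. -/
noncomputable def d2 (v e : ℕ) : ℝ :=
  if 3 ≤ v then (e - 1 : ℝ) / (v - 2 : ℝ) else if e = 1 then 1 / 2 else 0

/-- The maximum 2-density `m₂(H)` of a finite simple graph `H`. -/
noncomputable def m2 {α : Type*} [Fintype α] (H : SimpleGraph α) : ℝ :=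
  sSup {x : ℝ | ∃ J : H.Subgraph, x = d2 J.verts.ncard J.edgeSet.ncard}

/-- The maximum 2-density of an oriented graph: that of its underlying graph. -/
noncomputable def m2Rel {β : Type*} [Fintype β] (H : β → β → Prop) : ℝ :=
  m2 (SimpleGraph.fromRel H)
/-- A digraph is acyclic if it has no directed cycles, i.e. the transitive closure
of its arc relation is irreflexive. -/
def RelAcyclic {β : Type*} (H : β → β → Prop) : Prop :=
  Irreflexive (Relation.TransGen H)

section Containers
open Classical

/-- `g` is a fingerprint of `f`: `f I` can be recovered from any set between `g I` and `I`. -/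
def StableFP {V α : Type*} (g : Finset V → Finset V) (f : Finset V → α) : Prop :=
  ∀ I, g I ⊆ I ∧ ∀ J, g I ⊆ J → J ⊆ I → g J = g I ∧ f J = f I

lemma StableFP.const {V α : Type*} (a : α) :
    StableFP (fun _ : Finset V => (∅ : Finset V)) (fun _ => a) := by
  intro I; simp

lemma StableFP.query {V α : Type*} (v : V) {gY gN : Finset V → Finset V} {fY fN : Finset V → α}
    (hY : StableFP gY fY) (hN : StableFP gN fN) :
    StableFP (fun I => if v ∈ I then insert v (gY I) else gN I)
      (fun I => if v ∈ I then fY I else fN I) := by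
  intro I
  by_cases hv : v ∈ I
  · simp only [hv, if_true]
    refine ⟨Finset.insert_subset hv (hY I).1, fun J h1 h2 => ?_⟩
    have hvJ : v ∈ J := h1 (Finset.mem_insert_self _ _)
    obtain ⟨ha, hb⟩ := (hY I).2 J ((Finset.subset_insert _ _).trans h1) h2
    simp [hvJ, ha, hb]
  · simp only [hv, if_false]
    refine ⟨(hN I).1, fun J h1 h2 => ?_⟩
    have hvJ : v ∉ J := fun h => hv (h2 h)
    obtain ⟨ha, hb⟩ := (hN I).2 J h1 h2
    simp [hvJ, ha, hb]

lemma StableFP.comp {V α α' : Type*} {g : Finset V → Finset V} {f : Finset V → α}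
    (h : StableFP g f) {g' : α → Finset V → Finset V} {f' : α → Finset V → α'}
    (h' : ∀ a, StableFP (g' a) (f' a)) :
    StableFP (fun I => g I ∪ g' (f I) I) (fun I => f' (f I) I) := by
  intro I
  refine ⟨Finset.union_subset (h I).1 (h' _ I).1, fun J h1 h2 => ?_⟩
  obtain ⟨ha, hb⟩ := (h I).2 J (Finset.subset_union_left.trans h1) h2
  obtain ⟨hc, hd⟩ := (h' (f I) I).2 J (Finset.subset_union_right.trans h1) h2
  simp [ha, hb, hc, hd]

/-- Number of members of `E` with `T ⊆ e i`. -/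
noncomputable def hdeg {V ι : Type*} (E : Finset ι) (e : ι → Finset V) (T : Finset V) : ℕ :=
  (E.filter (fun i => T ⊆ e i)).card

/-- State of the algorithm. -/
structure CState (V ι : Type*) where
  F : Finset ι
  r : ι → V
  Del : Finset V

/-- reduced edges -/
noncomputable def CState.red {V ι : Type*} (s : CState V ι) (e : ι → Finset V) : ι → Finset V :=
  fun i => (e i).erase (s.r i)

/-- available edges, with saturation threshold `th`. -/
noncomputable def CState.avail {V ι : Type*} (s : CState V ι) (E : Finset ι) (e : ι → Finset V)
    (D τ : ℝ) : Finset ι :=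
  E.filter (fun i => i ∉ s.F ∧ Disjoint (e i) s.Del ∧
    ∀ T : Finset V, T.Nonempty → T ⊆ e i → (hdeg s.F (s.red e) T : ℝ) < D * τ ^ (T.card + 1))

lemma CState.mem_avail {V ι : Type*} (s : CState V ι) (E : Finset ι) (e : ι → Finset V)
    (D τ : ℝ) (i : ι) : i ∈ s.avail E e D τ ↔ i ∈ E ∧ i ∉ s.F ∧ Disjoint (e i) s.Del ∧
    ∀ T : Finset V, T.Nonempty → T ⊆ e i → (hdeg s.F (s.red e) T : ℝ) < D * τ ^ (T.card + 1) := by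
  rw [CState.avail, Finset.mem_filter]

lemma CState.avail_subset {V ι : Type*} (s : CState V ι) (E : Finset ι) (e : ι → Finset V)
    (D τ : ℝ) : s.avail E e D τ ⊆ E := fun i hi => ((s.mem_avail E e D τ i).1 hi).1

/-- invariant -/
structure CInv {V ι : Type*} (E : Finset ι) (e : ι → Finset V) (D τ M : ℝ) (s : CState V ι) :
    Prop where
  sub : s.F ⊆ E
  mem : ∀ i ∈ s.F, s.r i ∈ e i
  deg : ∀ T : Finset V, T.Nonempty → (hdeg s.F (s.red e) T : ℝ) ≤ 2 * D * τ ^ (T.card + 1)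
  card : (s.F.card : ℝ) ≤ M + D * τ
  del : s.Del ⊆ E.biUnion e

/-- compatibility with `I` -/
def CCompat {V ι : Type*} (s : CState V ι) (I : Finset V) : Prop :=
  (∀ i ∈ s.F, s.r i ∈ I) ∧ Disjoint s.Del I

lemma exists_deg {V ι : Type*} [Fintype V] (A : Finset ι) (e : ι → Finset V) (a : ℝ)
    (hk : ∀ i ∈ A, (e i).Nonempty) (hA : a * Fintype.card V ≤ A.card) (hne : A.Nonempty) :
    ∃ v, (∃ i ∈ A, v ∈ e i) ∧ a ≤ ((A.filter (fun i => v ∈ e i)).card : ℝ) := by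
  by_contra hcon
  push Not at hcon
  have h1 : A.card ≤ ∑ v : V, (A.filter (fun i => v ∈ e i)).card := by
    have : ∑ v : V, (A.filter (fun i => v ∈ e i)).card = ∑ i ∈ A, (e i).card := by
      simp_rw [Finset.card_filter]
      rw [Finset.sum_comm]
      simp
    rw [this, Finset.card_eq_sum_ones]
    exact Finset.sum_le_sum (fun i hi => (hk i hi).card_pos)
  by_cases ha : a ≤ 0
  · obtain ⟨i, hi⟩ := hne
    obtain ⟨v, hv⟩ := hk i hi
    have := hcon v ⟨i, hi, hv⟩
    have h2 : (0 : ℝ) ≤ ((A.filter (fun i => v ∈ e i)).card : ℝ) := by positivity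
    linarith
  · push Not at ha
    have h2 : ∀ v : V, ((A.filter (fun i => v ∈ e i)).card : ℝ) < a := by
      intro v
      by_cases hv : ∃ i ∈ A, v ∈ e i
      · exact hcon v hv
      · have : A.filter (fun i => v ∈ e i) = ∅ := by
          ext i; simp; intro hi hv'; exact hv ⟨i, hi, hv'⟩
        simp [this, ha]
    obtain ⟨i, hi⟩ := hne
    obtain ⟨v0, hv0⟩ := hk i hi
    have h3 : ∑ v : V, ((A.filter (fun i => v ∈ e i)).card : ℝ) < ∑ v : V, a :=
      Finset.sum_lt_sum_of_nonempty ⟨v0, Finset.mem_univ _⟩ (fun v _ => h2 v)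
    have h4 : (A.card : ℝ) ≤ ∑ v : V, ((A.filter (fun i => v ∈ e i)).card : ℝ) := by
      exact_mod_cast h1
    simp at h3
    nlinarith

lemma hdeg_mono {V ι : Type*} {E E' : Finset ι} {e e' : ι → Finset V} (h : E ⊆ E')
    (he : ∀ i ∈ E, e i = e' i) (T : Finset V) : hdeg E e T ≤ hdeg E' e' T := by
  apply Finset.card_le_card
  intro i hi
  simp only [Finset.mem_filter] at hi ⊢
  exact ⟨h hi.1, he i hi.1 ▸ hi.2⟩

/-- One "yes" step. -/
noncomputable def CState.yes {V ι : Type*} (s : CState V ι) (A : Finset ι) (e : ι → Finset V)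
    (v : V) : CState V ι where
  F := s.F ∪ A.filter (fun i => v ∈ e i)
  r := fun i => if i ∈ s.F then s.r i else v
  Del := s.Del

noncomputable def CState.no {V ι : Type*} (s : CState V ι) (v : V) : CState V ι where
  F := s.F
  r := s.r
  Del := insert v s.Del

lemma CState.yes_red {V ι : Type*} (s : CState V ι) (A : Finset ι) (e : ι → Finset V)
    (v : V) (i : ι) (hi : i ∈ s.F) : (s.yes A e v).red e i = s.red e i := by
  simp [CState.red, CState.yes, hi]

lemma CInv.yes {V ι : Type*} {E : Finset ι} {e : ι → Finset V} {D τ M : ℝ} {s : CState V ι}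
    (hdegE : ∀ T : Finset V, T.Nonempty → (hdeg E e T : ℝ) ≤ D * τ ^ T.card)
    (h : CInv E e D τ M s) (hM : (s.F.card : ℝ) < M) (v : V) :
    CInv E e D τ M (s.yes (s.avail E e D τ) e v) := by
  set A := s.avail E e D τ with hA
  have hAE : A ⊆ E := s.avail_subset E e D τ
  refine ⟨?_, ?_, ?_, ?_, h.del⟩
  · exact Finset.union_subset h.sub ((Finset.filter_subset _ _).trans hAE)
  · intro i hi
    simp only [CState.yes, Finset.mem_union, Finset.mem_filter] at hi ⊢
    by_cases hiF : i ∈ s.F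
    · simp [hiF, h.mem i hiF]
    · simp [hiF] at hi ⊢; exact hi.2
  · intro T hT
    have hsub : ((s.yes A e v).F.filter (fun i => T ⊆ (s.yes A e v).red e i)) ⊆
        (s.F.filter (fun i => T ⊆ s.red e i)) ∪
          (A.filter (fun i => v ∉ T ∧ insert v T ⊆ e i)) := by
      intro i hi
      simp only [Finset.mem_filter, Finset.mem_union] at hi ⊢
      by_cases hiF : i ∈ s.F
      · left; rw [CState.yes_red _ _ _ _ _ hiF] at hi; exact ⟨hiF, hi.2⟩
      · right
        obtain ⟨h1, h2⟩ := hi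
        simp only [CState.yes, Finset.mem_union, hiF, false_or, Finset.mem_filter] at h1
        simp only [CState.red, CState.yes, hiF, if_false] at h2
        refine ⟨h1.1, fun hv => ?_, Finset.insert_subset h1.2 (h2.trans (Finset.erase_subset _ _))⟩
        have := h2 hv
        simp at this
    have hle : hdeg (s.yes A e v).F ((s.yes A e v).red e) T ≤ hdeg s.F (s.red e) T +
        (A.filter (fun i => v ∉ T ∧ insert v T ⊆ e i)).card :=
      (Finset.card_le_card hsub).trans (Finset.card_union_le _ _)
    by_cases hne : (A.filter (fun i => v ∉ T ∧ insert v T ⊆ e i)).Nonempty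
    · obtain ⟨i, hi⟩ := hne
      simp only [Finset.mem_filter] at hi
      obtain ⟨hiA, hvT, hins⟩ := hi
      have h1 : (hdeg s.F (s.red e) T : ℝ) < D * τ ^ (T.card + 1) := by
        rw [hA, CState.mem_avail] at hiA
        exact hiA.2.2.2 T hT ((Finset.subset_insert _ _).trans hins)
      have h2 : ((A.filter (fun i => v ∉ T ∧ insert v T ⊆ e i)).card : ℝ) ≤
          D * τ ^ (T.card + 1) := by
        have := hdegE (insert v T) (Finset.insert_nonempty _ _)
        rw [Finset.card_insert_of_notMem hvT] at this
        refine le_trans ?_ this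
        norm_cast
        apply Finset.card_le_card
        intro j hj
        simp only [Finset.mem_filter] at hj ⊢
        exact ⟨hAE hj.1, hj.2.2⟩
      have h3 : (hdeg (s.yes A e v).F ((s.yes A e v).red e) T : ℝ) ≤ hdeg s.F (s.red e) T +
        ((A.filter (fun i => v ∉ T ∧ insert v T ⊆ e i)).card : ℝ) := by exact_mod_cast hle
      linarith
    · rw [Finset.not_nonempty_iff_eq_empty] at hne
      rw [hne] at hle
      refine le_trans ?_ (h.deg T hT)
      exact_mod_cast hle
  · have h1 : (s.yes A e v).F.card ≤ s.F.card + (A.filter (fun i => v ∈ e i)).card :=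
      Finset.card_union_le _ _
    have h2 : (A.filter (fun i => v ∈ e i)).card ≤ hdeg E e {v} := by
      apply Finset.card_le_card
      intro j hj
      simp only [Finset.mem_filter, Finset.singleton_subset_iff] at hj ⊢
      exact ⟨hAE hj.1, hj.2⟩
    have h3 := hdegE {v} (Finset.singleton_nonempty v)
    simp at h3
    have h4 : ((s.yes A e v).F.card : ℝ) ≤ s.F.card + hdeg E e {v} := by
      exact_mod_cast h1.trans (by omega)
    linarith

lemma CInv.no {V ι : Type*} {E : Finset ι} {e : ι → Finset V} {D τ M : ℝ} {s : CState V ι}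
    (h : CInv E e D τ M s) (v : V) (hv : ∃ i ∈ E, v ∈ e i) :
    CInv E e D τ M (s.no v) := by
  refine ⟨h.sub, h.mem, h.deg, h.card, ?_⟩
  apply Finset.insert_subset _ h.del
  simpa using hv

/-- The outcome of one stage of the algorithm. -/
lemma stage_run {V ι : Type*} [Fintype V] {E : Finset ι} {e : ι → Finset V} {D τ M a : ℝ}
    (ha : 0 < a)
    (hk : ∀ i ∈ E, (e i).Nonempty)
    (hdegE : ∀ T : Finset V, T.Nonempty → (hdeg E e T : ℝ) ≤ D * τ ^ T.card)
    (m : ℕ) :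
    ∀ s : CState V ι, CInv E e D τ M s → (s.avail E e D τ).card ≤ m →
    ∃ (g : Finset V → Finset V) (f : Finset V → CState V ι), StableFP g f ∧
      ∀ I, CCompat s I → CCompat (f I) I ∧ CInv E e D τ M (f I) ∧
        ((g I).card : ℝ) * a + s.F.card ≤ (f I).F.card ∧
        (M ≤ (f I).F.card ∨ (((f I).avail E e D τ).card : ℝ) ≤ a * Fintype.card V) := by
  induction m with
  | zero =>
    intro s hs hA
    refine ⟨_, _, StableFP.const s, fun I hI => ⟨hI, hs, by simp, Or.inr ?_⟩⟩
    have : (s.avail E e D τ).card = 0 := by omega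
    rw [this, Nat.cast_zero]; positivity
  | succ m ih =>
    intro s hs hA
    by_cases hfinish : M ≤ s.F.card ∨ (((s).avail E e D τ).card : ℝ) ≤ a * Fintype.card V
    · exact ⟨_, _, StableFP.const s, fun I hI => ⟨hI, hs, by simp, hfinish⟩⟩
    push Not at hfinish
    obtain ⟨hM, hAbig⟩ := hfinish
    set A := s.avail E e D τ with hAdef
    have hAE : A ⊆ E := s.avail_subset E e D τ
    have hne : A.Nonempty := by
      rw [← Finset.card_pos]
      have : (0 : ℝ) ≤ a * Fintype.card V := by positivity
      exact_mod_cast lt_of_le_of_lt this hAbig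
    obtain ⟨v, ⟨i0, hi0, hvi0⟩, hv⟩ := exists_deg A e a (fun i hi => hk i (hAE hi)) hAbig.le hne
    have hyes : (s.yes A e v).avail E e D τ ⊂ A := by
      rw [Finset.ssubset_iff_of_subset]
      · refine ⟨i0, hi0, ?_⟩
        simp only [CState.mem_avail, not_and]
        intro _ h
        exfalso; apply h
        simp [CState.yes, hi0, hvi0]
      · intro i hi
        rw [hAdef]
        simp only [CState.mem_avail] at hi ⊢
        refine ⟨hi.1, fun h => hi.2.1 (Finset.mem_union_left _ h), hi.2.2.1, fun T hT hTi => ?_⟩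
        refine lt_of_le_of_lt ?_ (hi.2.2.2 T hT hTi)
        norm_cast
        apply hdeg_mono
        · exact Finset.subset_union_left
        · intro j hj; rw [CState.yes_red _ _ _ _ _ hj]
    have hno : (s.no v).avail E e D τ ⊂ A := by
      rw [Finset.ssubset_iff_of_subset]
      · refine ⟨i0, hi0, ?_⟩
        simp only [CState.mem_avail, not_and]
        intro _ _ h
        exfalso
        exact (Finset.disjoint_left.mp h hvi0) (Finset.mem_insert_self _ _)
      · intro i hi
        rw [hAdef]
        simp only [CState.mem_avail] at hi ⊢
        refine ⟨hi.1, hi.2.1, ?_, hi.2.2.2⟩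
        exact Finset.disjoint_of_subset_right (Finset.subset_insert _ _) hi.2.2.1
    obtain ⟨gY, fY, hY, hY'⟩ := ih (s.yes A e v) (hs.yes hdegE hM v)
      (by have := Finset.card_lt_card hyes; omega)
    obtain ⟨gN, fN, hN, hN'⟩ := ih (s.no v) (hs.no v ⟨i0, hAE hi0, hvi0⟩)
      (by have := Finset.card_lt_card hno; omega)
    refine ⟨_, _, StableFP.query v hY hN, fun I hI => ?_⟩
    by_cases hvI : v ∈ I
    · simp only [hvI, if_true]
      have hc : CCompat (s.yes A e v) I := by
        refine ⟨fun i hi => ?_, hI.2⟩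
        by_cases hiF : i ∈ s.F
        · simpa [CState.yes, hiF] using hI.1 i hiF
        · simpa [CState.yes, hiF] using hvI
      obtain ⟨h1, h2, h3, h4⟩ := hY' I hc
      refine ⟨h1, h2, ?_, h4⟩
      have h5 : ((insert v (gY I)).card : ℝ) ≤ (gY I).card + 1 := by
        exact_mod_cast Finset.card_insert_le _ _
      have h6 : (s.yes A e v).F.card = s.F.card + (A.filter (fun i => v ∈ e i)).card := by
        apply Finset.card_union_of_disjoint
        rw [Finset.disjoint_left]
        intro i hi hi'
        have := (Finset.mem_filter.mp hi').1
        rw [hAdef, CState.mem_avail] at this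
        exact this.2.1 hi
      rw [h6] at h3
      push_cast at h3
      nlinarith
    · simp only [hvI, if_false]
      have hc : CCompat (s.no v) I := by
        refine ⟨hI.1, ?_⟩
        simp only [CState.no, Finset.disjoint_insert_left]
        exact ⟨hvI, hI.2⟩
      exact hN' I hc

end Containers

section Containers2
open Classical

lemma sum_hdeg_le {V ι : Type*} [Fintype V] (F : Finset ι) (e : ι → Finset V) (k : ℕ)
    (hk : ∀ i ∈ F, (e i).card ≤ k) :
    ∑ T : Finset V, hdeg F e T ≤ F.card * 2 ^ k := by
  simp only [hdeg, Finset.card_filter]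
  rw [Finset.sum_comm]
  rw [← smul_eq_mul]
  apply Finset.sum_le_card_nsmul
  intro i hi
  rw [← Finset.card_filter]
  have : (Finset.univ.filter (fun T => T ⊆ e i)) = (e i).powerset := by
    ext T; simp
  rw [this, Finset.card_powerset]
  exact Nat.pow_le_pow_right (by norm_num) (hk i hi)

lemma stage_count {V ι : Type*} [Fintype V] {E : Finset ι} {e : ι → Finset V} {D τ M : ℝ}
    (hτ : 0 < τ) (k : ℕ) (hk : ∀ i ∈ E, (e i).card = k)
    (hdegE : ∀ T : Finset V, T.Nonempty → (hdeg E e T : ℝ) ≤ D * τ ^ T.card)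
    (s : CState V ι) (hs : CInv E e D τ M s) :
    (E.card : ℝ) ≤ (s.avail E e D τ).card + s.F.card + s.Del.card * (D * τ)
      + s.F.card * 2 ^ k / τ := by
  set sat : Finset (Finset V) := Finset.univ.filter (fun T =>
    T.Nonempty ∧ D * τ ^ (T.card + 1) ≤ (hdeg s.F (s.red e) T : ℝ)) with hsat
  have hcov : E ⊆ s.avail E e D τ ∪ s.F ∪
      (s.Del.biUnion fun v => E.filter (fun i => {v} ⊆ e i)) ∪
      (sat.biUnion fun T => E.filter (fun i => T ⊆ e i)) := by
    intro i hi
    by_contra hcon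
    simp only [Finset.mem_union, not_or] at hcon
    obtain ⟨⟨⟨h1, h2⟩, h3⟩, h4⟩ := hcon
    apply h1
    rw [CState.mem_avail]
    refine ⟨hi, h2, ?_, ?_⟩
    · rw [Finset.disjoint_left]
      intro v hv hvD
      apply h3
      simp only [Finset.mem_biUnion, Finset.mem_filter, Finset.singleton_subset_iff]
      exact ⟨v, hvD, hi, hv⟩
    · intro T hT hTi
      by_contra hlt
      apply h4
      simp only [Finset.mem_biUnion, Finset.mem_filter]
      refine ⟨T, ?_, hi, hTi⟩
      simp only [hsat, Finset.mem_filter, Finset.mem_univ, true_and]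
      exact ⟨hT, not_lt.mp hlt⟩
  have h1 : E.card ≤ (s.avail E e D τ).card + s.F.card +
      (s.Del.biUnion fun v => E.filter (fun i => {v} ⊆ e i)).card +
      (sat.biUnion fun T => E.filter (fun i => T ⊆ e i)).card := by
    refine (Finset.card_le_card hcov).trans ((Finset.card_union_le _ _).trans ?_)
    gcongr
    refine (Finset.card_union_le _ _).trans ?_
    gcongr
    exact Finset.card_union_le _ _
  have h2 : ((s.Del.biUnion fun v => E.filter (fun i => {v} ⊆ e i)).card : ℝ) ≤
      s.Del.card * (D * τ) := by
    have : ((s.Del.biUnion fun v => E.filter (fun i => {v} ⊆ e i)).card : ℝ) ≤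
        ∑ v ∈ s.Del, (hdeg E e {v} : ℝ) := by
      exact_mod_cast Finset.card_biUnion_le
    refine this.trans ?_
    rw [← nsmul_eq_mul]
    apply Finset.sum_le_card_nsmul
    intro v _
    simpa using hdegE {v} (Finset.singleton_nonempty v)
  have h3 : ((sat.biUnion fun T => E.filter (fun i => T ⊆ e i)).card : ℝ) ≤
      s.F.card * 2 ^ k / τ := by
    have h31 : ((sat.biUnion fun T => E.filter (fun i => T ⊆ e i)).card : ℝ) ≤
        ∑ T ∈ sat, (hdeg E e T : ℝ) := by
      exact_mod_cast Finset.card_biUnion_le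
    have h32 : ∑ T ∈ sat, (hdeg E e T : ℝ) ≤ ∑ T ∈ sat, (hdeg s.F (s.red e) T : ℝ) / τ := by
      apply Finset.sum_le_sum
      intro T hT
      simp only [hsat, Finset.mem_filter, Finset.mem_univ, true_and] at hT
      refine (hdegE T hT.1).trans ?_
      rw [le_div_iff₀ hτ, mul_assoc, ← pow_succ]
      exact hT.2
    have h33 : ∑ T ∈ sat, (hdeg s.F (s.red e) T : ℝ) / τ ≤
        ∑ T : Finset V, (hdeg s.F (s.red e) T : ℝ) / τ := by
      apply Finset.sum_le_sum_of_subset_of_nonneg (Finset.subset_univ _)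
      intros; positivity
    have h34 : ∑ T : Finset V, (hdeg s.F (s.red e) T : ℝ) / τ ≤ s.F.card * 2 ^ k / τ := by
      rw [← Finset.sum_div]
      gcongr
      have := sum_hdeg_le s.F (s.red e) k (fun i hi =>
        (Finset.card_le_card (Finset.erase_subset _ _)).trans (hk i (hs.sub hi)).le)
      exact_mod_cast this
    linarith
  have h1' : (E.card : ℝ) ≤ (s.avail E e D τ).card + s.F.card +
      (s.Del.biUnion fun v => E.filter (fun i => {v} ⊆ e i)).card +
      (sat.biUnion fun T => E.filter (fun i => T ⊆ e i)).card := by exact_mod_cast h1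
  linarith

/-- One container step. -/
lemma container_step (k : ℕ) : ∀ γ : ℝ, 0 < γ → ∃ δ K : ℝ, 0 < δ ∧ 0 ≤ K ∧
    ∀ {V : Type*} {ι : Type*} [Fintype V] (E : Finset ι) (e : ι → Finset V) (D τ : ℝ),
    0 < D → 0 < τ → τ ≤ 1 → 1 ≤ τ * Fintype.card V → (∀ i ∈ E, (e i).card = k) →
    (∀ T : Finset V, T.Nonempty → (hdeg E e T : ℝ) ≤ D * τ ^ T.card) →
    γ * (D * τ * Fintype.card V) ≤ E.card →
    ∃ (g f : Finset V → Finset V), StableFP g f ∧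
      ∀ I, (∀ i ∈ E, ¬ e i ⊆ I) → ((g I).card : ℝ) ≤ K * (τ * Fintype.card V) ∧
        Disjoint (f I) I ∧ f I ⊆ E.biUnion e ∧ δ * Fintype.card V ≤ ((f I).card : ℝ) := by
  induction k with
  | zero =>
    intro γ hγ
    refine ⟨1, 0, one_pos, le_rfl, ?_⟩
    intro V ι _ E e D τ hD hτ hτ1 hN hk hdeg hE
    refine ⟨_, _, StableFP.const ∅, fun I hI => ?_⟩
    exfalso
    have : (0 : ℝ) < E.card := by
      refine lt_of_lt_of_le ?_ hE
      have : (0:ℝ) < τ * Fintype.card V := by linarith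
      have := mul_pos hγ (mul_pos hD this)
      linarith
    have : E.Nonempty := Finset.card_pos.mp (by exact_mod_cast this)
    obtain ⟨i, hi⟩ := this
    apply hI i hi
    rw [Finset.card_eq_zero.mp (hk i hi)]
    exact Finset.empty_subset _
  | succ k ih =>
    intro γ hγ
    set γ' : ℝ := γ / 2 ^ (k + 5) with hγ'
    have hγ'0 : 0 < γ' := by positivity
    obtain ⟨δ, K, hδ, hK, hih⟩ := ih γ' hγ'0
    refine ⟨min δ (γ / 4), K + (4 * γ' + 2) / γ, by positivity, by positivity, ?_⟩
    intro V ι _ E e D τ hD hτ hτ1 hN hk hdegE hE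
    set N : ℝ := (Fintype.card V : ℝ) with hNdef
    have hN0 : 0 < N := by
      by_contra h
      have : τ * N ≤ 0 := mul_nonpos_of_nonneg_of_nonpos hτ.le (not_lt.mp h)
      linarith
    set M : ℝ := γ' * ((2 * D * τ) * τ * N) with hM
    have hM0 : 0 < M := by positivity
    set a : ℝ := γ / 2 * (D * τ) with ha
    have ha0 : 0 < a := by positivity
    have hkne : ∀ i ∈ E, (e i).Nonempty := by
      intro i hi; rw [← Finset.card_pos, hk i hi]; omega
    have hVne : Nonempty V := by
      rw [← Fintype.card_pos_iff]; exact Nat.cast_pos.mp hN0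
    let s0 : CState V ι := ⟨∅, fun _ => Classical.choice hVne, ∅⟩
    have hs0 : CInv E e D τ M s0 := by
      refine ⟨by simp [s0], by simp [s0], ?_, ?_, by simp [s0]⟩
      · intro T hT
        simp [s0, hdeg]; positivity
      · simp [s0]; positivity
    obtain ⟨g1, f1, hst1, h1⟩ := stage_run (a := a) ha0 hkne hdegE _ s0 hs0 le_rfl
    -- second part
    have key : ∀ s : CState V ι, ∃ (g f : Finset V → Finset V), StableFP g f ∧
        ∀ I, (∀ i ∈ E, ¬ e i ⊆ I) → CCompat s I → CInv E e D τ M s →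
        (M ≤ s.F.card ∨ ((s.avail E e D τ).card : ℝ) ≤ a * N) →
        ((g I).card : ℝ) ≤ K * (τ * N) ∧
        Disjoint (f I) I ∧ f I ⊆ E.biUnion e ∧ min δ (γ / 4) * N ≤ ((f I).card : ℝ) := by
      intro s
      by_cases hs : CInv E e D τ M s
      swap
      · exact ⟨_, _, StableFP.const ∅, fun I _ _ h => absurd h hs⟩
      by_cases hMs : M ≤ s.F.card
      · obtain ⟨g, f, hst, h⟩ := hih s.F (s.red e) (2 * D * τ) τ (by positivity) hτ hτ1 hN
          (by
            intro i hi
            rw [CState.red, Finset.card_erase_of_mem (hs.mem i hi), hk i (hs.sub hi)]; rfl)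
          (by
            intro T hT
            refine (hs.deg T hT).trans (le_of_eq ?_)
            ring)
          hMs
        refine ⟨g, f, hst, fun I hI hc _ _ => ?_⟩
        obtain ⟨h1, h2, h3, h4⟩ := h I (by
          intro i hi hsub
          apply hI i (hs.sub hi)
          intro x hx
          by_cases hxr : x = s.r i
          · rw [hxr]; exact hc.1 i hi
          · exact hsub (Finset.mem_erase.mpr ⟨hxr, hx⟩))
        refine ⟨h1, h2, ?_, le_trans (by gcongr; exact min_le_left _ _) h4⟩
        refine h3.trans ?_
        intro x hx
        rw [Finset.mem_biUnion] at hx ⊢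
        obtain ⟨i, hi, hx⟩ := hx
        exact ⟨i, hs.sub hi, Finset.mem_of_mem_erase hx⟩
      · refine ⟨_, _, StableFP.const s.Del, fun I hI hc _ hor => ?_⟩
        have hA := hor.resolve_left hMs
        push Not at hMs
        refine ⟨by simp; positivity, hc.2, hs.del, ?_⟩
        have hcount := stage_count hτ (k + 1) hk hdegE s hs
        have hF : (s.F.card : ℝ) * 2 ^ (k + 1) / τ ≤ M * 2 ^ (k + 1) / τ := by gcongr
        have hM1 : M * 2 ^ (k + 1) / τ = γ / 8 * (D * τ * N) := by
          rw [hM, hγ']; field_simp; ring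
        have hM2 : M ≤ γ / 8 * (D * τ * N) := by
          rw [← hM1, le_div_iff₀ hτ]
          have h2k : (1 : ℝ) ≤ 2 ^ (k + 1) := one_le_pow₀ (by norm_num)
          nlinarith
        have hfin : γ / 4 * (D * τ * N) ≤ s.Del.card * (D * τ) := by
          rw [ha] at hA
          nlinarith
        have hDτ : 0 < D * τ := by positivity
        have : γ / 4 * N ≤ s.Del.card := by
          apply le_of_mul_le_mul_right _ hDτ
          linarith
        exact le_trans (by gcongr; exact min_le_right _ _) this
    choose g2 f2 hst2 h2 using key
    refine ⟨_, _, StableFP.comp hst1 hst2, fun I hI => ?_⟩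
    obtain ⟨hc, hinv, hcard, hor⟩ := h1 I ⟨by simp [s0], by simp [s0]⟩
    obtain ⟨hg2, h3, h4, h5⟩ := h2 (f1 I) I hI hc hinv hor
    refine ⟨?_, h3, h4, h5⟩
    have hu : ((g1 I ∪ g2 (f1 I) I).card : ℝ) ≤ (g1 I).card + (g2 (f1 I) I).card := by
      exact_mod_cast Finset.card_union_le _ _
    have hg1 : ((g1 I).card : ℝ) ≤ (4 * γ' + 2) / γ * (τ * N) := by
      have h6 : ((g1 I).card : ℝ) * a ≤ M + D * τ := by
        have := hinv.card
        have h0 : (s0.F.card : ℝ) = 0 := by simp [s0]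
        linarith
      have h7 : M + D * τ ≤ (4 * γ' + 2) / γ * (τ * N) * a := by
        have : (4 * γ' + 2) / γ * (τ * N) * a = M + (D * τ) * (τ * N) := by
          rw [ha, hM]; field_simp; ring
        rw [this]
        have : 0 < D * τ := by positivity
        nlinarith
      exact le_of_mul_le_mul_right (h6.trans h7) ha0
    linarith

/-- The container theorem. -/
theorem container_thm (k : ℕ) (ε : ℝ) (hε : 0 < ε) : ∃ K : ℝ, 0 ≤ K ∧
    ∀ {V : Type*} {ι : Type*} [Fintype V] (E : Finset ι) (e : ι → Finset V) (D τ : ℝ),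
    0 < D → 0 < τ → τ ≤ 1 → 1 ≤ τ * Fintype.card V → (∀ i ∈ E, (e i).card = k) →
    (∀ T : Finset V, T.Nonempty → (hdeg E e T : ℝ) ≤ D * τ ^ T.card) →
    ∃ (g f : Finset V → Finset V), StableFP g f ∧
      ∀ I, (∀ i ∈ E, ¬ e i ⊆ I) → ((g I).card : ℝ) ≤ K * (τ * Fintype.card V) ∧
        I ⊆ f I ∧ ((E.filter (fun i => e i ⊆ f I)).card : ℝ) < ε * (D * τ * Fintype.card V) := by
  obtain ⟨δ, K, hδ, hK, hstep⟩ := container_step k ε hε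
  obtain ⟨m, hm⟩ := exists_nat_gt (1 / δ)
  refine ⟨m * K, by positivity, ?_⟩
  intro V ι _ E e D τ hD hτ hτ1 hN hk hdegE
  set N : ℝ := (Fintype.card V : ℝ) with hNdef
  have hN0 : 0 < N := by
    by_contra h
    have : τ * N ≤ 0 := mul_nonpos_of_nonneg_of_nonpos hτ.le (not_lt.mp h)
    linarith
  have main : ∀ m : ℕ, ∀ C : Finset V, (C.card : ℝ) < m * (δ * N) →
      ∃ (g f : Finset V → Finset V), StableFP g f ∧
      ∀ I, (∀ i ∈ E, ¬ e i ⊆ I) → I ⊆ C → ((g I).card : ℝ) ≤ m * K * (τ * N) ∧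
        I ⊆ f I ∧ ((E.filter (fun i => e i ⊆ f I)).card : ℝ) < ε * (D * τ * N) := by
    intro m
    induction m with
    | zero =>
      intro C hC
      exfalso
      have : (0 : ℝ) ≤ C.card := by positivity
      simp at hC
      linarith
    | succ m ih =>
      intro C hC
      by_cases hsm : ((E.filter (fun i => e i ⊆ C)).card : ℝ) < ε * (D * τ * N)
      · refine ⟨_, _, StableFP.const C, fun I hI hIC => ⟨?_, hIC, hsm⟩⟩
        simp; positivity
      push Not at hsm
      obtain ⟨g1, f1, hst1, h1⟩ := hstep (E.filter (fun i => e i ⊆ C)) e D τ hD hτ hτ1 hN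
        (fun i hi => hk i (Finset.mem_filter.mp hi).1)
        (by
          intro T hT
          refine le_trans ?_ (hdegE T hT)
          exact_mod_cast hdeg_mono (Finset.filter_subset _ _) (fun _ _ => rfl) T)
        hsm
      have key : ∀ X : Finset V, ∃ (g f : Finset V → Finset V), StableFP g f ∧
          ∀ I, ((C \ X).card : ℝ) < m * (δ * N) → (∀ i ∈ E, ¬ e i ⊆ I) → I ⊆ C \ X →
          ((g I).card : ℝ) ≤ m * K * (τ * N) ∧
          I ⊆ f I ∧ ((E.filter (fun i => e i ⊆ f I)).card : ℝ) < ε * (D * τ * N) := by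
        intro X
        by_cases hX : ((C \ X).card : ℝ) < m * (δ * N)
        · obtain ⟨g, f, hst, h⟩ := ih _ hX
          exact ⟨g, f, hst, fun I _ => h I⟩
        · exact ⟨_, _, StableFP.const ∅, fun I h => absurd h hX⟩
      choose g2 f2 hst2 h2 using key
      refine ⟨_, _, StableFP.comp hst1 hst2, fun I hI hIC => ?_⟩
      obtain ⟨ha, hb, hc, hd⟩ := h1 I (fun i hi => hI i (Finset.mem_filter.mp hi).1)
      have hsub : f1 I ⊆ C := by
        refine hc.trans ?_
        rw [Finset.biUnion_subset]
        intro i hi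
        exact (Finset.mem_filter.mp hi).2
      obtain ⟨h3, h4, h5⟩ := h2 (f1 I) I
        (by
          have := Finset.card_sdiff_add_card_eq_card hsub
          have h' : ((C \ f1 I).card : ℝ) + (f1 I).card = C.card := by exact_mod_cast this
          push_cast at hC
          linarith)
        hI
        (by
          rw [Finset.subset_sdiff]
          exact ⟨hIC, hb.symm⟩)
      refine ⟨?_, h4, h5⟩
      have hu : ((g1 I ∪ g2 (f1 I) I).card : ℝ) ≤ (g1 I).card + (g2 (f1 I) I).card := by
        exact_mod_cast Finset.card_union_le _ _
      push_cast
      linarith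
  obtain ⟨g, f, hst, h⟩ := main m Finset.univ (by
    rw [Finset.card_univ, ← hNdef]
    rw [div_lt_iff₀ hδ] at hm
    nlinarith)
  exact ⟨g, f, hst, fun I hI => h I hI (Finset.subset_univ _)⟩

end Containers2

section Supersat
open Classical

lemma card_fiber_le {X Y Z : Type*} [Fintype X] [Fintype Y] [Fintype Z] (θ : X → Y)
    (hθ : Function.Injective θ) (φ : X → Z) :
    (Finset.univ.filter (fun ψ : Y → Z => ∀ x, ψ (θ x) = φ x)).card ≤
      Fintype.card Z ^ (Fintype.card Y - Fintype.card X) := by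
  have h1 : Fintype.card {y // y ∉ Set.range θ} = Fintype.card Y - Fintype.card X := by
    have := Fintype.card_subtype_compl (fun y => y ∈ Set.range θ)
    rw [this]
    congr 1
    exact (Fintype.card_congr (Equiv.ofInjective θ hθ)).symm
  have h2 : Fintype.card Z ^ (Fintype.card Y - Fintype.card X) =
      (Finset.univ : Finset ({y // y ∉ Set.range θ} → Z)).card := by
    rw [Finset.card_univ, Fintype.card_fun, h1]
  rw [h2]
  apply Finset.card_le_card_of_injOn (fun ψ y => ψ y.1) (fun _ _ => Finset.mem_univ _)
  intro ψ hψ ψ' hψ' heq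
  simp only [Finset.coe_filter, Finset.mem_univ, true_and, Set.mem_ofPred_eq] at hψ hψ'
  funext y
  by_cases hy : y ∈ Set.range θ
  · obtain ⟨x, rfl⟩ := hy
    rw [hψ, hψ']
  · exact congrFun heq ⟨y, hy⟩

lemma exists_trans_list {α : Type*} (r : α → α → Prop) (hr : ∀ x y, x ≠ y → r x y ∨ r y x) (m : ℕ) :
    ∀ X : Finset α, 2 ^ m ≤ X.card → ∃ l : List α, l.length = m ∧
      l.Pairwise (fun a b => a ≠ b ∧ r a b) ∧ ∀ x ∈ l, x ∈ X := by
  induction m with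
  | zero => intro X _; exact ⟨[], rfl, List.Pairwise.nil, by simp⟩
  | succ m ih =>
    intro X hX
    have hne : X.Nonempty := by
      rw [← Finset.card_pos]; exact lt_of_lt_of_le (by positivity) hX
    obtain ⟨x, hx⟩ := hne
    have hsplit : X.erase x ⊆ (X.erase x).filter (fun y => r x y) ∪
        (X.erase x).filter (fun y => r y x) := by
      intro y hy
      have hyx := Finset.ne_of_mem_erase hy
      rcases hr x y hyx.symm with h | h
      · exact Finset.mem_union_left _ (Finset.mem_filter.mpr ⟨hy, h⟩)
      · exact Finset.mem_union_right _ (Finset.mem_filter.mpr ⟨hy, h⟩)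
    have hc := (Finset.card_le_card hsplit).trans (Finset.card_union_le _ _)
    rw [Finset.card_erase_of_mem hx] at hc
    have hpos : 0 < 2 ^ m := by positivity
    rw [pow_succ] at hX
    have hor : 2 ^ m ≤ ((X.erase x).filter (fun y => r x y)).card ∨
        2 ^ m ≤ ((X.erase x).filter (fun y => r y x)).card := by omega
    rcases hor with h | h
    · obtain ⟨l, hl, hp, hm⟩ := ih _ h
      refine ⟨x :: l, by simp [hl], ?_, ?_⟩
      · rw [List.pairwise_cons]
        refine ⟨fun y hy => ?_, hp⟩
        have := hm y hy
        simp only [Finset.mem_filter, Finset.mem_erase] at this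
        exact ⟨this.1.1.symm, this.2⟩
      · intro y hy
        rcases List.mem_cons.mp hy with rfl | hy
        · exact hx
        · have := hm y hy
          simp only [Finset.mem_filter, Finset.mem_erase] at this
          exact this.1.2
    · obtain ⟨l, hl, hp, hm⟩ := ih _ h
      refine ⟨l ++ [x], by simp [hl], ?_, ?_⟩
      · rw [List.pairwise_append]
        refine ⟨hp, List.pairwise_singleton _ _, fun y hy z hz => ?_⟩
        rw [List.mem_singleton] at hz
        subst hz
        have := hm y hy
        simp only [Finset.mem_filter, Finset.mem_erase] at this
        exact ⟨this.1.1, this.2⟩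
      · intro y hy
        rcases List.mem_append.mp hy with hy | hy
        · have := hm y hy
          simp only [Finset.mem_filter, Finset.mem_erase] at this
          exact this.1.2
        · rw [List.mem_singleton] at hy
          exact hy ▸ hx

lemma exists_rank {β : Type*} [Fintype β] (H : β → β → Prop) (hac : RelAcyclic H) :
    ∃ ρ : β → ℕ, (∀ a, ρ a < Fintype.card β) ∧ Function.Injective ρ ∧
      ∀ a b, H a b → ρ a < ρ b := by
  have hpo : IsPartialOrder β (Relation.ReflTransGen H) :=
    { refl := fun a => Relation.ReflTransGen.refl
      trans := fun a b c h1 h2 => h1.trans h2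
      antisymm := fun a b h1 h2 => by
        by_contra hne
        rcases Relation.reflTransGen_iff_eq_or_transGen.mp h1 with h | h
        · exact hne h.symm
        · exact hac a (h.trans_left h2) }
  obtain ⟨s, hs, hle⟩ := extend_partialOrder (Relation.ReflTransGen H)
  have hlt : ∀ a b, a ≠ b → s a b →
      (Finset.univ.filter (fun c => s c a ∧ c ≠ a)).card <
        (Finset.univ.filter (fun c => s c b ∧ c ≠ b)).card := by
    intro a b hab h
    apply Finset.card_lt_card
    rw [Finset.ssubset_iff_of_subset]
    · exact ⟨a, by simp [h, hab], by simp⟩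
    · intro c hc
      simp only [Finset.mem_filter, Finset.mem_univ, true_and] at hc ⊢
      refine ⟨hs.trans _ _ _ hc.1 h, ?_⟩
      rintro rfl
      exact hab (hs.antisymm _ _ h hc.1)
  refine ⟨fun a => (Finset.univ.filter (fun c => s c a ∧ c ≠ a)).card, ?_, ?_, ?_⟩
  · intro a
    rw [← Finset.card_univ]
    apply Finset.card_lt_card
    rw [Finset.ssubset_iff_of_subset (Finset.subset_univ _)]
    exact ⟨a, Finset.mem_univ _, by simp⟩
  · intro a b hab
    by_contra hne
    rcases hs.total a b with h | h
    · exact absurd hab (hlt a b hne h).ne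
    · exact absurd hab (hlt b a (Ne.symm hne) h).ne'
  · intro a b hab
    refine hlt a b ?_ (hle _ _ (Relation.ReflTransGen.single hab))
    rintro rfl
    exact hac a (Relation.TransGen.single hab)

lemma exists_embed {β : Type*} [Fintype β] (H : β → β → Prop) (hac : RelAcyclic H)
    (R : ℕ) (hR : 2 ^ Fintype.card β ≤ R) (r : Fin R → Fin R → Prop)
    (hr : ∀ x y, x ≠ y → r x y ∨ r y x) :
    ∃ θ : β → Fin R, Function.Injective θ ∧ ∀ a b, H a b → r (θ a) (θ b) := by
  obtain ⟨ρ, hρ1, hρ2, hρ3⟩ := exists_rank H hac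
  obtain ⟨l, hl, hp, -⟩ := exists_trans_list r hr (Fintype.card β) Finset.univ (by simpa using hR)
  rw [List.pairwise_iff_getElem] at hp
  have hb : ∀ a, ρ a < l.length := fun a => hl ▸ hρ1 a
  refine ⟨fun a => l[ρ a]'(hb a), ?_, ?_⟩
  · intro a b hab
    by_contra hne
    rcases lt_or_gt_of_ne (fun h => hne (hρ2 h)) with h | h
    · exact (hp _ _ (hb a) (hb b) h).1 hab
    · exact (hp _ _ (hb b) (hb a) h).1 hab.symm
  · intro a b hab
    exact (hp _ _ (hb a) (hb b) (hρ3 a b hab)).2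

/-- Missing pairs. -/
noncomputable def missing {n : ℕ} (C : Finset (Fin n × Fin n)) : Finset (Fin n × Fin n) :=
  Finset.univ.filter (fun x => x.1 = x.2 ∨ (x ∉ C ∧ (x.2, x.1) ∉ C))

/-- copies of `H` in `C`. -/
noncomputable def copiesIn {β : Type*} [Fintype β] (H : β → β → Prop) {n : ℕ}
    (C : Finset (Fin n × Fin n)) : Finset (β → Fin n) :=
  Finset.univ.filter (fun φ => Function.Injective φ ∧ ∀ a b, H a b → (φ a, φ b) ∈ C)

lemma supersat_count {β : Type*} [Fintype β] (H : β → β → Prop) (hac : RelAcyclic H)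
    (R : ℕ) (hR : 2 ^ Fintype.card β ≤ R) (n : ℕ) (C : Finset (Fin n × Fin n)) :
    n ^ R ≤ R ^ 2 * ((missing C).card * n ^ (R - 2)) +
      R ^ Fintype.card β * ((copiesIn H C).card * n ^ (R - Fintype.card β)) := by
  have hcov : (Finset.univ : Finset (Fin R → Fin n)) ⊆
      ((Finset.univ : Finset (Fin R × Fin R)).biUnion fun ij =>
        (missing C).biUnion fun m => Finset.univ.filter
          (fun ψ : Fin R → Fin n => ij.1 ≠ ij.2 ∧ ψ ij.1 = m.1 ∧ ψ ij.2 = m.2)) ∪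
      ((Finset.univ : Finset (β → Fin R)).biUnion fun θ =>
        (copiesIn H C).biUnion fun φ => Finset.univ.filter
          (fun ψ : Fin R → Fin n => Function.Injective θ ∧ ∀ x, ψ (θ x) = φ x)) := by
    intro ψ _
    rw [Finset.mem_union]
    by_cases hbad : ∃ i j, i ≠ j ∧ (ψ i, ψ j) ∈ missing C
    · left
      obtain ⟨i, j, hij, hm⟩ := hbad
      simp only [Finset.mem_biUnion, Finset.mem_filter, Finset.mem_univ, true_and]
      exact ⟨(i, j), _, hm, hij, rfl, rfl⟩
    · right
      push Not at hbad
      have hb : ∀ i j, i ≠ j → ψ i ≠ ψ j ∧ ((ψ i, ψ j) ∈ C ∨ (ψ j, ψ i) ∈ C) := by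
        intro i j hij
        have := hbad i j hij
        simp only [missing, Finset.mem_filter, Finset.mem_univ, true_and, not_or, not_and,
          not_not] at this
        refine ⟨this.1, ?_⟩
        by_cases h : (ψ i, ψ j) ∈ C
        · exact Or.inl h
        · exact Or.inr (this.2 h)
      obtain ⟨θ, hθ, hθ2⟩ := exists_embed H hac R hR (fun i j => (ψ i, ψ j) ∈ C)
        (fun i j hij => (hb i j hij).2)
      simp only [Finset.mem_biUnion, Finset.mem_filter, Finset.mem_univ, true_and]
      refine ⟨θ, ψ ∘ θ, ?_, hθ, fun x => rfl⟩
      simp only [copiesIn, Finset.mem_filter, Finset.mem_univ, true_and]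
      refine ⟨?_, hθ2⟩
      intro a b hab
      by_contra hne
      exact (hb _ _ (fun h => hne (hθ h))).1 hab
  have h1 := (Finset.card_le_card hcov).trans (Finset.card_union_le _ _)
  rw [Finset.card_univ, Fintype.card_fun, Fintype.card_fin, Fintype.card_fin] at h1
  refine h1.trans (Nat.add_le_add ?_ ?_)
  · refine (Finset.card_biUnion_le_card_mul _ _ ((missing C).card * n ^ (R - 2)) ?_).trans ?_
    · intro ij _
      apply Finset.card_biUnion_le_card_mul
      intro m _
      by_cases hij : ij.1 ≠ ij.2
      · have := card_fiber_le (Z := Fin n) (![ij.1, ij.2] : Fin 2 → Fin R) (by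
          intro a b hab
          fin_cases a <;> fin_cases b <;> simp_all) ![m.1, m.2]
        simp only [Fintype.card_fin] at this
        refine le_trans (Finset.card_le_card ?_) this
        intro ψ hψ
        simp only [Finset.mem_filter, Finset.mem_univ, true_and] at hψ ⊢
        intro x
        fin_cases x
        · exact hψ.2.1
        · exact hψ.2.2
      · simp [hij]
    · simp [sq]
  · refine (Finset.card_biUnion_le_card_mul _ _
      ((copiesIn H C).card * n ^ (R - Fintype.card β)) ?_).trans ?_
    · intro θ _
      apply Finset.card_biUnion_le_card_mul
      intro φ _
      by_cases hθ : Function.Injective θ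
      · have := card_fiber_le (Z := Fin n) θ hθ φ
        simp only [Fintype.card_fin] at this
        refine le_trans (Finset.card_le_card ?_) this
        intro ψ hψ
        simp only [Finset.mem_filter, Finset.mem_univ, true_and] at hψ ⊢
        exact hψ.2
      · simp [hθ]
    · simp

lemma supersat {β : Type*} [Fintype β] (H : β → β → Prop) (hac : RelAcyclic H)
    (R : ℕ) (hR2 : 2 ≤ R) (hR : 2 ^ Fintype.card β ≤ R) (n : ℕ) (hn : 0 < n)
    (C : Finset (Fin n × Fin n))
    (hC : ((copiesIn H C).card : ℝ) < (n : ℝ) ^ Fintype.card β / (2 * (R : ℝ) ^ Fintype.card β)) :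
    (n : ℝ) ^ 2 / (2 * (R : ℝ) ^ 2) ≤ (missing C).card := by
  have h := supersat_count H hac R hR n C
  have hv : Fintype.card β ≤ R := (Nat.lt_two_pow_self).le.trans hR
  have h' : (n : ℝ) ^ R ≤ (R : ℝ) ^ 2 * ((missing C).card * (n : ℝ) ^ (R - 2)) +
      (R : ℝ) ^ Fintype.card β * ((copiesIn H C).card * (n : ℝ) ^ (R - Fintype.card β)) := by
    exact_mod_cast h
  have hn0 : (0 : ℝ) < n := by exact_mod_cast hn
  have hR0 : (0 : ℝ) < R := by exact_mod_cast (by omega : 0 < R)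
  have e1 : (n : ℝ) ^ R = (n : ℝ) ^ (R - 2) * (n : ℝ) ^ 2 := by
    rw [← pow_add]; congr 1; omega
  have e2 : (n : ℝ) ^ R = (n : ℝ) ^ (R - Fintype.card β) * (n : ℝ) ^ Fintype.card β := by
    rw [← pow_add]; congr 1; omega
  rw [lt_div_iff₀ (by positivity)] at hC
  rw [div_le_iff₀ (by positivity)]
  set x := (n : ℝ) ^ (R - Fintype.card β) with hx
  have hx0 : 0 < x := by positivity
  have h3 : (R : ℝ) ^ Fintype.card β * ((copiesIn H C).card * x) ≤ (n : ℝ) ^ R / 2 := by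
    rw [e2]
    nlinarith
  have h4 : (n : ℝ) ^ R / 2 ≤ (R : ℝ) ^ 2 * ((missing C).card * (n : ℝ) ^ (R - 2)) := by linarith
  have hy0 : 0 < (n : ℝ) ^ (R - 2) := by positivity
  rw [e1] at h4
  apply le_of_mul_le_mul_left _ hy0
  linarith

end Supersat

section Degree
open Classical

/-- arcs of `H` -/
noncomputable def arcsOf {β : Type*} [Fintype β] (H : β → β → Prop) : Finset (β × β) :=
  Finset.univ.filter (fun x => H x.1 x.2)

/-- endpoints -/
noncomputable def endsOf {β : Type*} (J : Finset (β × β)) : Finset β :=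
  J.image Prod.fst ∪ J.image Prod.snd

lemma m2_ineq {β : Type*} [Fintype β] (H : β → β → Prop)
    (hor : ∀ a b, H a b → ¬ H b a) (J : Finset (β × β)) (hJ : J ⊆ arcsOf H) (hne : J.Nonempty) :
    2 ≤ (endsOf J).card ∧ (J.card : ℝ) - 1 ≤ m2Rel H * ((endsOf J).card - 2) := by
  have hJH : ∀ x ∈ J, H x.1 x.2 := fun x hx => (Finset.mem_filter.mp (hJ hx)).2
  have hirr : ∀ a, ¬ H a a := fun a h => hor a a h h
  have hJne : ∀ x ∈ J, x.1 ≠ x.2 := by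
    intro x hx h
    have := hJH x hx
    rw [h] at this
    exact hirr _ this
  have h1 : ∀ x ∈ J, x.1 ∈ endsOf J := fun x hx =>
    Finset.mem_union_left _ (Finset.mem_image_of_mem _ hx)
  have h2 : ∀ x ∈ J, x.2 ∈ endsOf J := fun x hx =>
    Finset.mem_union_right _ (Finset.mem_image_of_mem _ hx)
  obtain ⟨x, hx⟩ := hne
  have hpair : ({x.1, x.2} : Finset β) ⊆ endsOf J := by
    intro y hy
    simp only [Finset.mem_insert, Finset.mem_singleton] at hy
    rcases hy with rfl | rfl
    · exact h1 x hx
    · exact h2 x hx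
  have hpc : ({x.1, x.2} : Finset β).card = 2 := Finset.card_pair (hJne x hx)
  have hge : 2 ≤ (endsOf J).card := hpc ▸ Finset.card_le_card hpair
  refine ⟨hge, ?_⟩
  by_cases h3 : 3 ≤ (endsOf J).card
  · let S : (SimpleGraph.fromRel H).Subgraph :=
      { verts := (endsOf J : Set β)
        Adj := fun a b => (a, b) ∈ J ∨ (b, a) ∈ J
        adj_sub := by
          intro a b hab
          rw [SimpleGraph.fromRel_adj]
          rcases hab with h | h
          · exact ⟨hJne _ h, Or.inl (hJH _ h)⟩
          · exact ⟨(hJne _ h).symm, Or.inr (hJH _ h)⟩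
        edge_vert := by
          intro a b hab
          rcases hab with h | h
          · exact h1 _ h
          · exact h2 _ h
        symm := ⟨by
          intro a b hab
          exact hab.symm⟩ }
    have hv : S.verts.ncard = (endsOf J).card := Set.ncard_coe_finset _
    have he : S.edgeSet.ncard = J.card := by
      have : S.edgeSet = ((J.image (fun x => s(x.1, x.2)) : Finset (Sym2 β)) : Set (Sym2 β)) := by
        ext z
        induction z using Sym2.ind with
        | _ a b =>
          rw [SimpleGraph.Subgraph.mem_edgeSet]
          simp only [Finset.coe_image, Set.mem_image, Finset.mem_coe, Prod.exists, Sym2.eq_iff, S]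
          constructor
          · rintro (h | h)
            · exact ⟨a, b, h, Or.inl ⟨rfl, rfl⟩⟩
            · exact ⟨b, a, h, Or.inr ⟨rfl, rfl⟩⟩
          · rintro ⟨c, d, h, (⟨rfl, rfl⟩ | ⟨rfl, rfl⟩)⟩
            · exact Or.inl h
            · exact Or.inr h
      rw [this, Set.ncard_coe_finset, Finset.card_image_of_injOn]
      rintro ⟨a, b⟩ hab ⟨c, d⟩ hcd h
      simp only [Sym2.eq_iff] at h
      rcases h with ⟨rfl, rfl⟩ | ⟨rfl, rfl⟩
      · rfl
      · exact absurd (hJH _ hcd) (hor _ _ (hJH _ hab))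
    have hle : d2 S.verts.ncard S.edgeSet.ncard ≤ m2Rel H := by
      apply le_csSup
      · apply Set.Finite.bddAbove
        have : {x : ℝ | ∃ J : (SimpleGraph.fromRel H).Subgraph,
            x = d2 J.verts.ncard J.edgeSet.ncard} =
            Set.range (fun J : (SimpleGraph.fromRel H).Subgraph =>
              d2 J.verts.ncard J.edgeSet.ncard) := by
          ext x; simp [eq_comm]
        rw [this]
        exact Set.finite_range _
      · exact ⟨S, rfl⟩
    rw [hv, he, d2, if_pos h3, div_le_iff₀] at hle
    · exact hle
    · have : (3 : ℝ) ≤ (endsOf J).card := by exact_mod_cast h3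
      linarith
  · have hc2 : (endsOf J).card = 2 := by omega
    have heq : ({x.1, x.2} : Finset β) = endsOf J :=
      Finset.eq_of_subset_of_card_le hpair (by omega)
    have hJ1 : J ⊆ {x} := by
      intro y hy
      have ha := h1 y hy
      have hb := h2 y hy
      rw [← heq] at ha hb
      simp only [Finset.mem_insert, Finset.mem_singleton] at ha hb ⊢
      have hyne := hJne y hy
      have hHx := hJH x hx
      have hHy := hJH y hy
      rcases ha with ha | ha <;> rcases hb with hb | hb
      · exact absurd (ha.trans hb.symm) hyne
      · exact Prod.ext ha hb
      · rw [ha, hb] at hHy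
        exact absurd hHy (hor _ _ hHx)
      · exact absurd (ha.trans hb.symm) hyne
    have hJc : J.card ≤ 1 := by simpa using Finset.card_le_card hJ1
    have : (J.card : ℝ) ≤ 1 := by exact_mod_cast hJc
    rw [hc2]
    push_cast
    linarith

/-- The arc set of the copy `φ`. -/
noncomputable def copyArcs {β : Type*} [Fintype β] (H : β → β → Prop) {n : ℕ} (φ : β → Fin n) :
    Finset (Fin n × Fin n) := (arcsOf H).image (Prod.map φ φ)

/-- All injective maps. -/
noncomputable def injMaps (β : Type*) [Fintype β] (n : ℕ) : Finset (β → Fin n) :=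
  Finset.univ.filter Function.Injective

lemma copyArcs_card {β : Type*} [Fintype β] (H : β → β → Prop) {n : ℕ} (φ : β → Fin n)
    (hφ : φ ∈ injMaps β n) : (copyArcs H φ).card = (arcsOf H).card := by
  have hφ' : Function.Injective φ := (Finset.mem_filter.mp hφ).2
  exact Finset.card_image_of_injective _ (hφ'.prodMap hφ')

lemma hdeg_le_of_cover {V ι : Type*} {E : Finset ι} {e : ι → Finset V} {T : Finset V}
    (B : Finset ι) (h : ∀ i ∈ E, T ⊆ e i → i ∈ B) : hdeg E e T ≤ B.card := by
  apply Finset.card_le_card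
  intro i hi
  rw [Finset.mem_filter] at hi
  exact h i hi.1 hi.2

lemma hdeg_copy_le {β : Type*} [Fintype β] (H : β → β → Prop) (n : ℕ) (X : ℝ) (hX : 0 ≤ X)
    (T : Finset (Fin n × Fin n))
    (hJ : ∀ J ⊆ arcsOf H, J.card = T.card →
      (n : ℝ) ^ (Fintype.card β - (endsOf J).card) ≤ X) :
    (hdeg (injMaps β n) (copyArcs H) T : ℝ) ≤
      (((arcsOf H).card + 1) ^ (arcsOf H).card : ℕ) * X := by
  set k := (arcsOf H).card with hk
  by_cases hTk : T.card ≤ k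
  swap
  · have : hdeg (injMaps β n) (copyArcs H) T = 0 := by
      rw [← Nat.le_zero, ← Finset.card_empty (α := β → Fin n)]
      apply hdeg_le_of_cover
      intro φ hφ hsub
      exfalso
      have := Finset.card_le_card hsub
      rw [copyArcs_card H φ hφ] at this
      omega
    rw [this, Nat.cast_zero]
    positivity
  have hcov : ∀ φ ∈ injMaps β n, T ⊆ copyArcs H φ → φ ∈
      (Finset.univ : Finset (T → arcsOf H)).biUnion (fun h => Finset.univ.filter
        (fun φ : β → Fin n => Function.Injective h ∧
          ∀ t : T, φ (h t).1.1 = t.1.1 ∧ φ (h t).1.2 = t.1.2)) := by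
    intro φ _ hsub
    have hex : ∀ t : T, ∃ x : arcsOf H, Prod.map φ φ x.1 = t.1 := by
      intro t
      have := hsub t.2
      rw [copyArcs, Finset.mem_image] at this
      obtain ⟨x, hx, hxt⟩ := this
      exact ⟨⟨x, hx⟩, hxt⟩
    choose h hh using hex
    simp only [Finset.mem_biUnion, Finset.mem_filter, Finset.mem_univ, true_and]
    refine ⟨h, ?_, fun t => ?_⟩
    · intro t t' htt
      apply Subtype.ext
      rw [← hh t, ← hh t', htt]
    · have := hh t
      exact ⟨congrArg Prod.fst this, congrArg Prod.snd this⟩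
  have hone : ∀ h : T → arcsOf H, ((Finset.univ.filter
        (fun φ : β → Fin n => Function.Injective h ∧
          ∀ t : T, φ (h t).1.1 = t.1.1 ∧ φ (h t).1.2 = t.1.2)).card : ℝ) ≤ X := by
    intro h
    by_cases hne : (Finset.univ.filter
        (fun φ : β → Fin n => Function.Injective h ∧
          ∀ t : T, φ (h t).1.1 = t.1.1 ∧ φ (h t).1.2 = t.1.2)).Nonempty
    swap
    · rw [Finset.not_nonempty_iff_eq_empty] at hne
      rw [hne]; simpa using hX
    obtain ⟨φ0, hφ0⟩ := hne
    simp only [Finset.mem_filter, Finset.mem_univ, true_and] at hφ0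
    set J : Finset (β × β) := Finset.univ.image (fun t : T => (h t).1) with hJdef
    have hJc : J.card = T.card := by
      rw [hJdef, Finset.card_image_of_injective]
      · simp
      · intro t t' htt
        exact hφ0.1 (Subtype.ext htt)
    have hJs : J ⊆ arcsOf H := by
      intro x hx
      rw [hJdef, Finset.mem_image] at hx
      obtain ⟨t, -, rfl⟩ := hx
      exact (h t).2
    have hb := card_fiber_le (Z := Fin n) (fun x : endsOf J => x.1) Subtype.val_injective
      (fun x => φ0 x.1)
    simp only [Fintype.card_fin, Fintype.card_coe] at hb
    refine le_trans ?_ (hJ J hJs hJc)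
    rw [← Nat.cast_pow, Nat.cast_le]
    refine le_trans (Finset.card_le_card ?_) hb
    intro φ hφ
    simp only [Finset.mem_filter, Finset.mem_univ, true_and] at hφ ⊢
    rintro ⟨x, hx⟩
    simp only [endsOf, hJdef, Finset.mem_union, Finset.mem_image, Finset.mem_univ, true_and] at hx
    rcases hx with ⟨y, ⟨t, rfl⟩, rfl⟩ | ⟨y, ⟨t, rfl⟩, rfl⟩
    · exact (hφ.2 t).1.trans (hφ0.2 t).1.symm
    · exact (hφ.2 t).2.trans (hφ0.2 t).2.symm
  have hle : (hdeg (injMaps β n) (copyArcs H) T : ℝ) ≤ ∑ h : T → arcsOf H, X := by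
    refine le_trans ?_ (Finset.sum_le_sum (fun h _ => hone h))
    have := (hdeg_le_of_cover _ hcov).trans Finset.card_biUnion_le
    exact_mod_cast this
  refine hle.trans ?_
  rw [Finset.sum_const, nsmul_eq_mul, Finset.card_univ, Fintype.card_fun, Fintype.card_coe,
    Fintype.card_coe, ← hk]
  apply mul_le_mul_of_nonneg_right _ hX
  rw [Nat.cast_le]
  calc k ^ T.card ≤ (k + 1) ^ T.card := Nat.pow_le_pow_left (by omega) _
    _ ≤ (k + 1) ^ k := Nat.pow_le_pow_right (by omega) hTk

lemma deg_bound {β : Type*} [Fintype β] (H : β → β → Prop)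
    (hor : ∀ a b, H a b → ¬ H b a) (hm : 0 < m2Rel H) (n : ℕ) (hn : 0 < n)
    (τ : ℝ) (hτ : τ = (n : ℝ) ^ (-(1 / m2Rel H)))
    (T : Finset (Fin n × Fin n)) (hT : T.Nonempty) :
    (hdeg (injMaps β n) (copyArcs H) T : ℝ) ≤
      ((((arcsOf H).card + 1) ^ (arcsOf H).card : ℕ) *
        ((n : ℝ) ^ Fintype.card β / (n ^ 2 * τ))) * τ ^ T.card := by
  have hn0 : (0 : ℝ) < n := by exact_mod_cast hn
  have hn1 : (1 : ℝ) ≤ n := by exact_mod_cast hn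
  have hτ0 : 0 < τ := by rw [hτ]; positivity
  rw [mul_assoc]
  apply hdeg_copy_le
  · positivity
  intro J hJ hJT
  have hJne : J.Nonempty := by
    rw [← Finset.card_pos, hJT, Finset.card_pos]; exact hT
  obtain ⟨h2, hineq⟩ := m2_ineq H hor J hJ hJne
  have hWv : (endsOf J).card ≤ Fintype.card β := Finset.card_le_univ _
  set W := (endsOf J).card
  set v := Fintype.card β
  set m := m2Rel H
  rw [← hJT]
  have e1 : (n : ℝ) ^ (v - W) = (n : ℝ) ^ ((v : ℝ) - W) := by
    rw [← Real.rpow_natCast, Nat.cast_sub hWv]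
  have e2 : (n : ℝ) ^ v / (n ^ 2 * τ) * τ ^ J.card =
      (n : ℝ) ^ ((v : ℝ) - (2 + -(1 / m)) + -(1 / m) * J.card) := by
    rw [Real.rpow_add hn0, Real.rpow_sub hn0, Real.rpow_add hn0, Real.rpow_mul hn0.le, ← hτ]
    norm_cast
  rw [e1, e2]
  apply Real.rpow_le_rpow_of_exponent_le hn1
  have : ((J.card : ℝ) - 1) / m ≤ W - 2 := by
    rw [div_le_iff₀ hm]; linarith
  have e3 : ((J.card : ℝ) - 1) / m = (1 / m) * J.card - 1 / m := by ring
  rw [e3] at this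
  linarith

end Degree

section Prob
open Classical

lemma prob_single (n : ℕ) (p : ℝ) (hp0 : 0 ≤ p) (hp1 : p ≤ 1) (F M : Finset (Sym2 (Fin n)))
    (hF : ∀ z ∈ F, ¬ z.IsDiag) (hM : ∀ z ∈ M, ¬ z.IsDiag) :
    probGnp n p (fun G => (F : Set (Sym2 (Fin n))) ⊆ G.edgeSet ∧ ∀ z ∈ M, z ∉ G.edgeSet) ≤
      p ^ F.card * (1 - p) ^ M.card := by
  set U : Finset (Sym2 (Fin n)) := (⊤ : SimpleGraph (Fin n)).edgeFinset with hU
  have hUmem : ∀ z, z ∈ U ↔ ¬ z.IsDiag := by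
    intro z; simp [hU]
  have hUc : U.card = n.choose 2 := by
    rw [hU, SimpleGraph.card_edgeFinset_top_eq_card_choose_two, Fintype.card_fin]
  let a : Sym2 (Fin n) → ℝ := fun z => if z ∈ M then 0 else p
  let b : Sym2 (Fin n) → ℝ := fun z => if z ∈ F then 0 else 1 - p
  have h1p : 0 ≤ 1 - p := by linarith
  have ha : ∀ z, 0 ≤ a z := by intro z; simp only [a]; split_ifs <;> linarith
  have hb : ∀ z, 0 ≤ b z := by intro z; simp only [b]; split_ifs <;> linarith
  have step1 : probGnp n p (fun G => (F : Set (Sym2 (Fin n))) ⊆ G.edgeSet ∧ ∀ z ∈ M, z ∉ G.edgeSet)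
      ≤ ∑ T ∈ U.powerset, (∏ z ∈ T, a z) * ∏ z ∈ U \ T, b z := by
    have hinj : Function.Injective (fun G : SimpleGraph (Fin n) => G.edgeFinset) := by
      intro G G' h
      exact SimpleGraph.edgeFinset_inj.mp h
    have hsub : (Finset.univ.image (fun G : SimpleGraph (Fin n) => G.edgeFinset)) ⊆ U.powerset := by
      intro T hT
      rw [Finset.mem_image] at hT
      obtain ⟨G, -, rfl⟩ := hT
      rw [Finset.mem_powerset]
      intro z hz
      rw [hUmem]
      exact SimpleGraph.not_isDiag_of_mem_edgeFinset hz
    refine le_trans ?_ (Finset.sum_le_sum_of_subset_of_nonneg hsub ?_)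
    · rw [Finset.sum_image (fun x _ y _ h => hinj h), probGnp]
      apply Finset.sum_le_sum
      intro G _
      have hGU : G.edgeFinset ⊆ U := by
        rw [← Finset.mem_powerset]
        exact hsub (Finset.mem_image_of_mem _ (Finset.mem_univ _))
      have hnc : G.edgeSet.ncard = G.edgeFinset.card := by
        rw [← SimpleGraph.coe_edgeFinset, Set.ncard_coe_finset]
      split_ifs with hQ
      · apply le_of_eq
        have hA : ∏ z ∈ G.edgeFinset, a z = p ^ G.edgeFinset.card := by
          rw [← Finset.prod_const]
          apply Finset.prod_congr rfl
          intro z hz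
          have : z ∉ M := fun h => hQ.2 z h (SimpleGraph.mem_edgeFinset.mp hz)
          simp [a, this]
        have hB : ∏ z ∈ U \ G.edgeFinset, b z = (1 - p) ^ (U \ G.edgeFinset).card := by
          rw [← Finset.prod_const]
          apply Finset.prod_congr rfl
          intro z hz
          have : z ∉ F := fun h =>
            (Finset.mem_sdiff.mp hz).2 (SimpleGraph.mem_edgeFinset.mpr (hQ.1 h))
          simp [b, this]
        rw [hA, hB, Finset.card_sdiff_of_subset hGU, hUc, hnc]
      · exact mul_nonneg (Finset.prod_nonneg fun z _ => ha z) (Finset.prod_nonneg fun z _ => hb z)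
    · intro T _ _
      exact mul_nonneg (Finset.prod_nonneg fun z _ => ha z) (Finset.prod_nonneg fun z _ => hb z)
  refine step1.trans ?_
  rw [← Finset.prod_add]
  have hFU : F ⊆ U := fun z hz => (hUmem z).mpr (hF z hz)
  have hMU : M ⊆ U := fun z hz => (hUmem z).mpr (hM z hz)
  have e1 : p ^ F.card = ∏ z ∈ U, if z ∈ F then p else 1 := by
    rw [Finset.prod_ite_mem, Finset.inter_eq_right.mpr hFU, Finset.prod_const]
  have e2 : (1 - p) ^ M.card = ∏ z ∈ U, if z ∈ M then 1 - p else 1 := by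
    rw [Finset.prod_ite_mem, Finset.inter_eq_right.mpr hMU, Finset.prod_const]
  rw [e1, e2, ← Finset.prod_mul_distrib]
  apply Finset.prod_le_prod
  · intro z _; exact add_nonneg (ha z) (hb z)
  · intro z _
    simp only [a, b]
    split_ifs <;> nlinarith

lemma prob_union (n : ℕ) (p : ℝ) (hp0 : 0 ≤ p) (hp1 : p ≤ 1) {κ : Type*} (𝒮 : Finset κ)
    (Q : SimpleGraph (Fin n) → Prop) (P : κ → SimpleGraph (Fin n) → Prop)
    (h : ∀ G, Q G → ∃ S ∈ 𝒮, P S G) :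
    probGnp n p Q ≤ ∑ S ∈ 𝒮, probGnp n p (P S) := by
  have h1p : 0 ≤ 1 - p := by linarith
  simp only [probGnp]
  rw [Finset.sum_comm]
  apply Finset.sum_le_sum
  intro G _
  have hnn : ∀ S ∈ 𝒮, 0 ≤ (if P S G then
      p ^ G.edgeSet.ncard * (1 - p) ^ (n.choose 2 - G.edgeSet.ncard) else 0) := by
    intro S _; split_ifs <;> positivity
  split_ifs with hQ
  · obtain ⟨S, hS, hPS⟩ := h G hQ
    refine le_trans ?_ (Finset.single_le_sum hnn hS)
    rw [if_pos hPS]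
  · exact Finset.sum_nonneg hnn

lemma sum_small_sets {V : Type*} [Fintype V] (p x b : ℝ) (hp : 0 ≤ p) (hx : 1 ≤ x)
    (𝒮 : Finset (Finset V)) (h𝒮 : ∀ S ∈ 𝒮, (S.card : ℝ) ≤ b) :
    ∑ S ∈ 𝒮, p ^ S.card ≤ Real.exp (b * Real.log x + p * Fintype.card V / x) := by
  have hx0 : 0 < x := by linarith
  have h1 : ∀ S ∈ 𝒮, p ^ S.card ≤ x ^ b * (p / x) ^ S.card := by
    intro S hS
    rw [div_pow, ← mul_div_assoc, le_div_iff₀ (by positivity), mul_comm]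
    gcongr
    rw [← Real.rpow_natCast]
    exact Real.rpow_le_rpow_of_exponent_le hx (h𝒮 S hS)
  calc ∑ S ∈ 𝒮, p ^ S.card ≤ ∑ S ∈ 𝒮, x ^ b * (p / x) ^ S.card := Finset.sum_le_sum h1
    _ ≤ ∑ S : Finset V, x ^ b * (p / x) ^ S.card :=
        Finset.sum_le_sum_of_subset_of_nonneg (Finset.subset_univ _) (fun S _ _ => by positivity)
    _ = x ^ b * (p / x + 1) ^ Fintype.card V := by
        rw [← Finset.mul_sum, ← Fintype.sum_pow_mul_eq_add_pow]
        simp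
    _ ≤ x ^ b * (Real.exp (p / x)) ^ Fintype.card V := by
        gcongr
        exact Real.add_one_le_exp _
    _ = Real.exp (b * Real.log x + p * Fintype.card V / x) := by
        rw [← Real.exp_nat_mul, Real.rpow_def_of_pos hx0, ← Real.exp_add]
        congr 1; ring

end Prob

section Final
open Classical

lemma card_le_filter_generic {V ι : Type*} (E : Finset ι) (e : ι → Finset V) (C : Finset V)
    (B : Finset ι) (h : ∀ i ∈ B, i ∈ E ∧ e i ⊆ C) :
    B.card ≤ (E.filter (fun i => e i ⊆ C)).card := by
  apply Finset.card_le_card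
  intro i hi
  rw [Finset.mem_filter]
  exact h i hi

/-- unordered missing pairs -/
noncomputable def missingEdges {n : ℕ} (C : Finset (Fin n × Fin n)) : Finset (Sym2 (Fin n)) :=
  ((missing C).filter (fun x => x.1 ≠ x.2)).image (fun x => s(x.1, x.2))

lemma missingEdges_card {n : ℕ} (C : Finset (Fin n × Fin n)) :
    (missing C).card ≤ n + 2 * (missingEdges C).card := by
  have h1 : (missing C).card = ((missing C).filter (fun x => x.1 ≠ x.2)).card +
      ((missing C).filter (fun x => ¬ x.1 ≠ x.2)).card :=
    (Finset.card_filter_add_card_filter_not _).symm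
  have h2 : ((missing C).filter (fun x => ¬ x.1 ≠ x.2)).card ≤ n := by
    have : ((missing C).filter (fun x => ¬ x.1 ≠ x.2)).card ≤
        (Finset.univ : Finset (Fin n)).card := by
      apply Finset.card_le_card_of_injOn (fun x => x.1) (fun _ _ => Finset.mem_univ _)
      intro x hx y hy hxy
      simp only [Finset.coe_filter, Set.mem_ofPred_eq, not_not] at hx hy
      apply Prod.ext hxy
      rw [← hx.2, ← hy.2]; exact hxy
    simpa using this
  have h3 : ((missing C).filter (fun x => x.1 ≠ x.2)).card ≤ 2 * (missingEdges C).card := by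
    apply Finset.card_le_mul_card_image
    intro z _
    induction z using Sym2.ind with
    | _ a b =>
      refine le_trans (Finset.card_le_card (t := {(a, b), (b, a)}) ?_) Finset.card_le_two
      rintro ⟨c, d⟩ hx
      simp only [Finset.mem_filter, Sym2.eq_iff] at hx
      simp only [Finset.mem_insert, Finset.mem_singleton, Prod.mk.injEq]
      exact hx.2
  omega

theorem main_thm {β : Type*} [Fintype β] (H : β → β → Prop)
    (hor : ∀ a b, H a b → ¬ H b a) (hacyclic : RelAcyclic H)
    (hm : 1 / 2 < m2Rel H) :
    ∃ B β' : ℝ, 0 < β' ∧ ∃ N : ℕ, ∀ n : ℕ, N ≤ n → ∀ p : ℝ, 0 ≤ p → p ≤ 1 →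
      B * (n : ℝ) ^ (-(1 / m2Rel H)) ≤ p →
      probGnp n p (fun G => ¬ Arrows G H) ≤ Real.exp (-(β' * p * (n : ℝ) ^ 2)) := by
  have hm0 : 0 < m2Rel H := by linarith
  set v := Fintype.card β with hv
  set k := (arcsOf H).card with hk
  set R : ℕ := 2 ^ v + 2 with hR
  set C0 : ℝ := ((((arcsOf H).card + 1) ^ (arcsOf H).card : ℕ) : ℝ) with hC0
  have hC0pos : 0 < C0 := by rw [hC0]; positivity
  have hR0 : (0 : ℝ) < R := by rw [hR]; positivity
  set ε : ℝ := 1 / (2 * (R : ℝ) ^ v * C0) with hε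
  have hε0 : 0 < ε := by positivity
  obtain ⟨K, hK, hcont⟩ := container_thm k ε hε0
  set c : ℝ := 1 / (8 * (R : ℝ) ^ 2) with hc
  have hc0 : 0 < c := by positivity
  have hR1 : (1 : ℝ) ≤ R := by
    have : 1 ≤ R := by rw [hR]; exact Nat.le_add_left_of_le (by norm_num)
    exact_mod_cast this
  have hc1 : c ≤ 1 := by
    rw [hc, div_le_one (by positivity)]
    nlinarith
  set x : ℝ := 4 / c with hx
  have hx1 : 1 ≤ x := by
    rw [hx, le_div_iff₀ hc0]; linarith
  have hlog : 0 ≤ Real.log x := Real.log_nonneg hx1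
  refine ⟨4 * K * Real.log x / c + 1, c / 2, by positivity, 4 * R ^ 2, ?_⟩
  intro n hn p hp0 hp1 hp
  have hnpos : 0 < n := lt_of_lt_of_le (by positivity) hn
  have hn0 : (0 : ℝ) < n := by exact_mod_cast hnpos
  have hn1 : (1 : ℝ) ≤ n := by exact_mod_cast hnpos
  set τ : ℝ := (n : ℝ) ^ (-(1 / m2Rel H)) with hτ
  have hτ0 : 0 < τ := by positivity
  have hτ1 : τ ≤ 1 := by
    apply Real.rpow_le_one_of_one_le_of_nonpos hn1
    have : 0 < 1 / m2Rel H := by positivity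
    linarith
  have hcardV : (Fintype.card (Fin n × Fin n) : ℝ) = (n : ℝ) ^ 2 := by
    simp [sq]
  have hτN : 1 ≤ τ * Fintype.card (Fin n × Fin n) := by
    rw [hcardV]
    have : τ * (n : ℝ) ^ 2 = (n : ℝ) ^ (-(1 / m2Rel H) + 2) := by
      rw [Real.rpow_add hn0, ← hτ]
      norm_cast
    rw [this]
    apply Real.one_le_rpow hn1
    have : 1 / m2Rel H ≤ 2 := by
      rw [div_le_iff₀ hm0]; linarith
    linarith
  set D : ℝ := C0 * ((n : ℝ) ^ v / (n ^ 2 * τ)) with hD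
  have hD0 : 0 < D := by positivity
  obtain ⟨g, f, hst, hgf⟩ := hcont (injMaps β n) (copyArcs H) D τ hD0 hτ0 hτ1 hτN
    (fun φ hφ => copyArcs_card H φ hφ)
    (fun T hT => deg_bound H hor hm0 n hnpos τ hτ T hT)
  have hDτN : ε * (D * τ * Fintype.card (Fin n × Fin n)) = (n : ℝ) ^ v / (2 * (R : ℝ) ^ v) := by
    rw [hcardV, hD, hε]; field_simp
  rw [hDτN, hcardV] at hgf
  set b : ℝ := K * (τ * (n : ℝ) ^ 2) with hb
  set 𝒮 : Finset (Finset (Fin n × Fin n)) := Finset.univ.filter (fun S =>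
    (S.card : ℝ) ≤ b ∧ (∀ y ∈ S, y.1 ≠ y.2) ∧ (∀ y ∈ S, (y.2, y.1) ∉ S) ∧
      ((copiesIn H (f S)).card : ℝ) < (n : ℝ) ^ v / (2 * (R : ℝ) ^ v)) with h𝒮
  set sy : Fin n × Fin n → Sym2 (Fin n) := fun y => s(y.1, y.2) with hsy
  -- union bound
  have hunion : probGnp n p (fun G => ¬ Arrows G H) ≤ ∑ S ∈ 𝒮, probGnp n p (fun G =>
      ((S.image sy : Finset (Sym2 (Fin n))) : Set (Sym2 (Fin n))) ⊆ G.edgeSet ∧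
        ∀ z ∈ missingEdges (f S), z ∉ G.edgeSet) := by
    apply prob_union n p hp0 hp1
    intro G hG
    rw [Arrows] at hG
    push Not at hG
    obtain ⟨o, ho, hcopy⟩ := hG
    set I : Finset (Fin n × Fin n) := Finset.univ.filter (fun y => o y.1 y.2) with hI
    have hImem : ∀ y, y ∈ I ↔ o y.1 y.2 := by intro y; simp [hI]
    have hind : ∀ φ ∈ injMaps β n, ¬ copyArcs H φ ⊆ I := by
      intro φ hφ hsub
      apply hcopy
      refine ⟨φ, (Finset.mem_filter.mp hφ).2, fun a b' hab => ?_⟩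
      have : (φ a, φ b') ∈ I := by
        apply hsub
        rw [copyArcs, Finset.mem_image]
        exact ⟨(a, b'), by simp [arcsOf, hab], rfl⟩
      exact (hImem _).mp this
    obtain ⟨h1, h2, h3⟩ := hgf I hind
    have hsub : g I ⊆ I := (hst I).1
    have hfeq : f (g I) = f I := ((hst I).2 (g I) (Finset.Subset.refl _) hsub).2
    have hIadj : ∀ y ∈ I, G.Adj y.1 y.2 := fun y hy => ho.1 _ _ ((hImem y).mp hy)
    refine ⟨g I, ?_, ?_, ?_⟩
    · rw [h𝒮, Finset.mem_filter]
      refine ⟨Finset.mem_univ _, h1, fun y hy => (hIadj y (hsub hy)).ne, fun y hy hy' => ?_, ?_⟩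
      · have ha := (hImem _).mp (hsub hy)
        have hb' := (hImem _).mp (hsub hy')
        exact (ho.2 _ _ (hIadj y (hsub hy))).mp ha hb'
      · rw [hfeq]
        refine lt_of_le_of_lt (Nat.cast_le.mpr ?_) h3
        apply card_le_filter_generic
        intro φ hφ
        rw [copiesIn, Finset.mem_filter] at hφ
        refine ⟨Finset.mem_filter.mpr ⟨Finset.mem_univ _, hφ.2.1⟩, ?_⟩
        intro y hy
        rw [copyArcs, Finset.mem_image] at hy
        obtain ⟨w, hw, rfl⟩ := hy
        exact hφ.2.2 _ _ (Finset.mem_filter.mp hw).2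
    · intro z hz
      rw [Finset.mem_coe, Finset.mem_image] at hz
      obtain ⟨y, hy, rfl⟩ := hz
      exact hIadj y (hsub hy)
    · intro z hz hzG
      rw [hfeq, missingEdges, Finset.mem_image] at hz
      obtain ⟨y, hy, rfl⟩ := hz
      rw [Finset.mem_filter, missing, Finset.mem_filter] at hy
      obtain ⟨⟨-, hy1⟩, hy2⟩ := hy
      rcases hy1 with hy1 | hy1
      · exact hy2 hy1
      have hadj : G.Adj y.1 y.2 := hzG
      by_cases hoy : o y.1 y.2
      · exact hy1.1 (h2 ((hImem _).mpr hoy))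
      · have : o y.2 y.1 := (ho.2 _ _ hadj.symm).mpr hoy
        exact hy1.2 (h2 ((hImem (y.2, y.1)).mpr this))
  have hone : ∀ S ∈ 𝒮, probGnp n p (fun G =>
      ((S.image sy : Finset (Sym2 (Fin n))) : Set (Sym2 (Fin n))) ⊆ G.edgeSet ∧
        ∀ z ∈ missingEdges (f S), z ∉ G.edgeSet) ≤
        p ^ S.card * Real.exp (-(p * (c * (n : ℝ) ^ 2))) := by
    intro S hS
    rw [h𝒮, Finset.mem_filter] at hS
    obtain ⟨-, hS1, hS2, hS3, hS4⟩ := hS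
    have hps := prob_single n p hp0 hp1 (S.image sy) (missingEdges (f S))
      (by
        intro z hz
        rw [Finset.mem_image] at hz
        obtain ⟨y, hy, rfl⟩ := hz
        simpa [hsy] using hS2 y hy)
      (by
        intro z hz
        rw [missingEdges, Finset.mem_image] at hz
        obtain ⟨y, hy, rfl⟩ := hz
        simpa using (Finset.mem_filter.mp hy).2)
    have hcardS : (S.image sy).card = S.card := by
      apply Finset.card_image_of_injOn
      rintro ⟨a, b'⟩ hy ⟨a', b''⟩ hy' heq
      simp only [hsy, Sym2.eq_iff] at heq
      rcases heq with ⟨rfl, rfl⟩ | ⟨rfl, rfl⟩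
      · rfl
      · exact absurd hy' (hS3 _ hy)
    rw [hcardS] at hps
    refine hps.trans ?_
    gcongr
    have hmiss := supersat H hacyclic R (Nat.le_add_left _ _) (Nat.le_add_right _ _) n hnpos (f S) hS4
    have hme : ((missing (f S)).card : ℝ) ≤ n + 2 * (missingEdges (f S)).card := by
      exact_mod_cast missingEdges_card (f S)
    have hbig : c * (n : ℝ) ^ 2 ≤ (missingEdges (f S)).card := by
      have e1 : (n : ℝ) ^ 2 / (2 * (R : ℝ) ^ 2) = 4 * (c * (n : ℝ) ^ 2) := by
        rw [hc]; field_simp; norm_num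
      have e2 : (n : ℝ) ≤ 2 * (c * (n : ℝ) ^ 2) := by
        have : (4 * (R : ℝ) ^ 2) ≤ n := by exact_mod_cast hn
        have e3 : 2 * (c * (n : ℝ) ^ 2) = n * (n / (4 * (R : ℝ) ^ 2)) := by
          rw [hc]; field_simp; norm_num
        rw [e3]
        have : 1 ≤ (n : ℝ) / (4 * (R : ℝ) ^ 2) := by
          rw [le_div_iff₀ (by positivity)]; linarith
        nlinarith
      linarith
    have h1p : 0 ≤ 1 - p := by linarith
    calc (1 - p) ^ (missingEdges (f S)).card
        ≤ (Real.exp (-p)) ^ (missingEdges (f S)).card := by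
          gcongr
          exact Real.one_sub_le_exp_neg p
      _ = Real.exp (-(p * (missingEdges (f S)).card)) := by
          rw [← Real.exp_nat_mul]; congr 1; ring
      _ ≤ Real.exp (-(p * (c * (n : ℝ) ^ 2))) := by
          apply Real.exp_le_exp.mpr
          have := mul_le_mul_of_nonneg_left hbig hp0
          linarith
  have hsum := sum_small_sets p x b hp0 hx1 𝒮
    (fun S hS => by rw [h𝒮, Finset.mem_filter] at hS; exact hS.2.1)
  calc probGnp n p (fun G => ¬ Arrows G H) ≤ _ := hunion
    _ ≤ ∑ S ∈ 𝒮, p ^ S.card * Real.exp (-(p * (c * (n : ℝ) ^ 2))) := Finset.sum_le_sum hone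
    _ = (∑ S ∈ 𝒮, p ^ S.card) * Real.exp (-(p * (c * (n : ℝ) ^ 2))) := by rw [Finset.sum_mul]
    _ ≤ Real.exp (b * Real.log x + p * Fintype.card (Fin n × Fin n) / x) *
          Real.exp (-(p * (c * (n : ℝ) ^ 2))) := by gcongr
    _ ≤ Real.exp (-(c / 2 * p * (n : ℝ) ^ 2)) := by
        rw [← Real.exp_add]
        apply Real.exp_le_exp.mpr
        rw [hcardV]
        have e1 : p * (n : ℝ) ^ 2 / x = c / 4 * (p * (n : ℝ) ^ 2) := by
          rw [hx]; field_simp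
        have e2 : K * Real.log x * τ ≤ c / 4 * p := by
          have : (4 * K * Real.log x / c + 1) * τ = 4 / c * (K * Real.log x * τ) + τ := by ring
          rw [this] at hp
          have h4 : 4 / c * (K * Real.log x * τ) ≤ p := by linarith
          have h5 := mul_le_mul_of_nonneg_left h4 (by positivity : 0 ≤ c / 4)
          have h6 : c / 4 * (4 / c * (K * Real.log x * τ)) = K * Real.log x * τ := by
            field_simp
          linarith
        have e3 := mul_le_mul_of_nonneg_right e2 (by positivity : (0 : ℝ) ≤ (n : ℝ) ^ 2)
        rw [e1, hb]
        linarith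

end Final

/-- For every acyclically oriented graph `H⃗` with `m₂(H⃗) > 1/2` there are constants
`B` and `β > 0` such that if `p ≥ B·n^{-1/m₂(H⃗)}`, then for all sufficiently large `n`,
`P(G(n,p) ↛ H⃗) ≤ e^{-β·p·n²}`. -/
theorem stmt8 {β : Type*} [Fintype β] (H : β → β → Prop)
    (hor : ∀ a b, H a b → ¬ H b a) (hacyclic : RelAcyclic H)
    (hm : 1 / 2 < m2Rel H) :
    ∃ B β' : ℝ, 0 < β' ∧ ∃ N : ℕ, ∀ n : ℕ, N ≤ n → ∀ p : ℝ, 0 ≤ p → p ≤ 1 →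
      B * (n : ℝ) ^ (-(1 / m2Rel H)) ≤ p →
      probGnp n p (fun G => ¬ Arrows G H) ≤ Real.exp (-(β' * p * (n : ℝ) ^ 2)) := by
  exact main_thm H hor hacyclic hm
end

section
/- There is an absolute constant c > 0 such that for every constant δ with 0 < δ ≤ 1/6 the following holds: if p = p(n) ≥ n^{δ−2/3}, then a.a.s. the random graph G(n,p) contains at least c·n^{6δ} pairwise vertex-disjoint copies of K₄. -/
namespace K4Pack

/-- Expectation of `f` over a `p`-random subset of `U`. -/
noncomputable def Ex {α : Type*} [DecidableEq α] (p : ℝ) (U : Finset α) (f : Finset α → ℝ) : ℝ :=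
  ∑ A ∈ U.powerset, p ^ A.card * (1 - p) ^ (U.card - A.card) * f A

section
variable {α : Type*} [DecidableEq α]

lemma Ex_empty (p : ℝ) (f : Finset α → ℝ) : Ex p ∅ f = f ∅ := by
  simp [Ex]

lemma Ex_insert (p : ℝ) {U : Finset α} {a : α} (ha : a ∉ U) (f : Finset α → ℝ) :
    Ex p (insert a U) f = (1 - p) * Ex p U f + p * Ex p U (fun A => f (insert a A)) := by
  unfold Ex
  rw [Finset.sum_powerset_insert ha, Finset.mul_sum, Finset.mul_sum]
  congr 1
  · apply Finset.sum_congr rfl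
    intro A hA
    have h := Finset.card_le_card (Finset.mem_powerset.1 hA)
    rw [Finset.card_insert_of_notMem ha, Nat.succ_sub h, pow_succ]
    ring
  · apply Finset.sum_congr rfl
    intro A hA
    have h' : a ∉ A := fun h => ha (Finset.mem_powerset.1 hA h)
    rw [Finset.card_insert_of_notMem ha, Finset.card_insert_of_notMem h', Nat.add_sub_add_right,
      pow_succ]
    ring

lemma Ex_mono {p : ℝ} (h0 : 0 ≤ p) (h1 : p ≤ 1) {U : Finset α} {f g : Finset α → ℝ}
    (h : ∀ A ⊆ U, f A ≤ g A) : Ex p U f ≤ Ex p U g := by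
  unfold Ex
  apply Finset.sum_le_sum
  intro A hA
  have : 0 ≤ 1 - p := by linarith
  exact mul_le_mul_of_nonneg_left (h A (Finset.mem_powerset.1 hA)) (by positivity)

lemma Ex_congr {p : ℝ} {U : Finset α} {f g : Finset α → ℝ}
    (h : ∀ A ⊆ U, f A = g A) : Ex p U f = Ex p U g := by
  unfold Ex
  apply Finset.sum_congr rfl
  intro A hA
  rw [h A (Finset.mem_powerset.1 hA)]

lemma Ex_const (p : ℝ) (U : Finset α) (c : ℝ) : Ex p U (fun _ => c) = c := by
  induction U using Finset.induction_on with
  | empty => simp [Ex_empty]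
  | insert a U ha ih => rw [Ex_insert p ha, ih]; ring

lemma Ex_add (p : ℝ) (U : Finset α) (f g : Finset α → ℝ) :
    Ex p U (fun A => f A + g A) = Ex p U f + Ex p U g := by
  simp [Ex, mul_add, Finset.sum_add_distrib]

lemma Ex_smul (p : ℝ) (U : Finset α) (c : ℝ) (f : Finset α → ℝ) :
    Ex p U (fun A => c * f A) = c * Ex p U f := by
  simp only [Ex, Finset.mul_sum]
  exact Finset.sum_congr rfl fun _ _ => by ring

lemma Ex_sub (p : ℝ) (U : Finset α) (f g : Finset α → ℝ) :
    Ex p U (fun A => f A - g A) = Ex p U f - Ex p U g := by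
  simp [Ex, mul_sub, Finset.sum_sub_distrib]

lemma Ex_sum {ι : Type*} (p : ℝ) (U : Finset α) (s : Finset ι) (f : ι → Finset α → ℝ) :
    Ex p U (fun A => ∑ i ∈ s, f i A) = ∑ i ∈ s, Ex p U (f i) := by
  simp only [Ex, Finset.mul_sum]
  exact Finset.sum_comm

lemma Ex_sq_le {p : ℝ} (h0 : 0 ≤ p) (h1 : p ≤ 1) (U : Finset α) (f : Finset α → ℝ) :
    (Ex p U f) ^ 2 ≤ Ex p U (fun A => f A ^ 2) := by
  have h : 0 ≤ Ex p U (fun A => (f A - Ex p U f) ^ 2) := by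
    calc (0 : ℝ) = Ex p U (fun _ => (0 : ℝ)) := (Ex_const p U 0).symm
      _ ≤ _ := Ex_mono h0 h1 fun A _ => sq_nonneg _
  have e : Ex p U (fun A => (f A - Ex p U f) ^ 2)
      = Ex p U (fun A => f A ^ 2) - (Ex p U f) ^ 2 := by
    set m := Ex p U f with hm
    have : (fun A => (f A - m) ^ 2) = fun A => (f A ^ 2 + (-2 * m) * f A) + m ^ 2 := by
      funext A; ring
    rw [this, Ex_add, Ex_add, Ex_smul, Ex_const, ← hm]; ring
  linarith

lemma Ex_mono_p {p q : ℝ} (h0 : 0 ≤ p) (hpq : p ≤ q) (h1 : q ≤ 1) (U : Finset α) :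
    ∀ f : Finset α → ℝ, Monotone f → Ex p U f ≤ Ex q U f := by
  induction U using Finset.induction_on with
  | empty => intro f _; simp [Ex_empty]
  | insert a U ha ih =>
    intro f hf
    rw [Ex_insert p ha, Ex_insert q ha]
    have i0 := ih f hf
    have i1 := ih (fun A => f (insert a A)) (fun A B h => hf (Finset.insert_subset_insert a h))
    have i2 : Ex q U f ≤ Ex q U (fun A => f (insert a A)) :=
      Ex_mono (h0.trans hpq) h1 fun A _ => hf (Finset.subset_insert a A)
    have a0 := mul_le_mul_of_nonneg_left i0 (by linarith : 0 ≤ 1 - p)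
    have a1 := mul_le_mul_of_nonneg_left i1 h0
    nlinarith

lemma Ex_sub_indicator {p : ℝ} (U : Finset α) :
    ∀ B : Finset α, B ⊆ U → Ex p U (fun A => if B ⊆ A then 1 else 0) = p ^ B.card := by
  induction U using Finset.induction_on with
  | empty =>
    intro B hB
    rw [Finset.subset_empty.1 hB]; simp [Ex_empty]
  | insert a U ha ih =>
    intro B hB
    rw [Ex_insert p ha]
    by_cases haB : a ∈ B
    · have e0 : Ex p U (fun A => if B ⊆ A then (1 : ℝ) else 0) = 0 := by
        refine (Ex_congr ?_).trans (Ex_const p U 0)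
        intro A hA
        rw [if_neg]
        exact fun h => ha (hA (h haB))
      have e1 : Ex p U (fun A => if B ⊆ insert a A then (1 : ℝ) else 0)
          = p ^ (B.erase a).card := by
        rw [← ih (B.erase a) (Finset.subset_insert_iff.1 hB)]
        apply Ex_congr
        intro A hA
        simp only [Finset.subset_insert_iff]
      rw [e0, e1, ← Finset.card_erase_add_one haB, pow_succ]; ring
    · have hB' : B ⊆ U := (Finset.subset_insert_iff_of_notMem haB).1 hB
      have e1 : Ex p U (fun A => if B ⊆ insert a A then (1 : ℝ) else 0) = p ^ B.card := by
        rw [← ih B hB']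
        apply Ex_congr
        intro A hA
        simp only [Finset.subset_insert_iff_of_notMem haB]
      rw [ih B hB', e1]; ring

/-- Efron–Stein inequality. -/
lemma efron_stein {p : ℝ} (h0 : 0 ≤ p) (h1 : p ≤ 1) (U : Finset α) :
    ∀ f : Finset α → ℝ, Ex p U (fun A => f A ^ 2) - (Ex p U f) ^ 2 ≤
      ∑ e ∈ U, Ex p U (fun A => if e ∈ A then (f A - f (A.erase e)) ^ 2 else 0) := by
  induction U using Finset.induction_on with
  | empty => intro f; simp [Ex_empty]
  | insert a U ha ih =>
    intro f
    rw [Finset.sum_insert ha]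
    have ea : Ex p (insert a U) (fun A => if a ∈ A then (f A - f (A.erase a)) ^ 2 else 0)
        = p * Ex p U (fun A => (f (insert a A) - f A) ^ 2) := by
      rw [Ex_insert p ha]
      have e0 : Ex p U (fun A => if a ∈ A then (f A - f (A.erase a)) ^ 2 else 0) = 0 := by
        refine (Ex_congr ?_).trans (Ex_const p U 0)
        intro A hA
        rw [if_neg]
        exact fun h => ha (hA h)
      rw [e0, mul_zero, zero_add]
      congr 1
      apply Ex_congr
      intro A hA
      have : a ∉ A := fun h => ha (hA h)
      simp [Finset.erase_insert this]
    have eU : ∑ e ∈ U, Ex p (insert a U) (fun A => if e ∈ A then (f A - f (A.erase e)) ^ 2 else 0)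
        = (1 - p) * ∑ e ∈ U, Ex p U (fun A => if e ∈ A then (f A - f (A.erase e)) ^ 2 else 0)
        + p * ∑ e ∈ U, Ex p U (fun A => if e ∈ A then
            (f (insert a A) - f (insert a (A.erase e))) ^ 2 else 0) := by
      rw [Finset.mul_sum, Finset.mul_sum, ← Finset.sum_add_distrib]
      apply Finset.sum_congr rfl
      intro e he
      have hea : a ≠ e := fun h => ha (h ▸ he)
      rw [Ex_insert p ha]
      congr 2
      apply Ex_congr
      intro A hA
      simp [hea.symm, Finset.erase_insert_of_ne hea]
    rw [ea, eU, Ex_insert p ha, Ex_insert p ha]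
    have i0 := mul_le_mul_of_nonneg_left (ih f) (by linarith : 0 ≤ 1 - p)
    have i1 := mul_le_mul_of_nonneg_left (ih (fun A => f (insert a A))) h0
    have i2 := Ex_sq_le h0 h1 U (fun A => f (insert a A) - f A)
    rw [Ex_sub] at i2
    have i3 : p * (1 - p) * (Ex p U (fun A => f (insert a A)) - Ex p U f) ^ 2
        ≤ p * Ex p U (fun A => (f (insert a A) - f A) ^ 2) := by
      have : (1 - p) * (Ex p U (fun A => f (insert a A)) - Ex p U f) ^ 2
        ≤ (Ex p U (fun A => f (insert a A)) - Ex p U f) ^ 2 := by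
        nlinarith [sq_nonneg (Ex p U (fun A => f (insert a A)) - Ex p U f)]
      rw [mul_assoc]
      exact mul_le_mul_of_nonneg_left (this.trans i2) h0
    nlinarith

/-- Chebyshev for self-bounding functions. -/
lemma chebyshev {p : ℝ} (h0 : 0 ≤ p) (h1 : p ≤ 1) (U : Finset α) (f : Finset α → ℝ)
    (K m : ℝ) (hK : 0 ≤ K) (hm : 0 < m) (hmf : m ≤ Ex p U f)
    (hf : ∀ A ⊆ U, ∑ e ∈ U, (if e ∈ A then (f A - f (A.erase e)) ^ 2 else 0) ≤ K * f A) :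
    1 - 4 * K / m ≤ Ex p U (fun A => if m / 2 ≤ f A then 1 else 0) := by
  set M := Ex p U f with hM
  have v := efron_stein h0 h1 U f
  rw [← Ex_sum] at v
  have v2 := v.trans (Ex_mono h0 h1 hf)
  rw [Ex_smul, ← hM] at v2
  have e : Ex p U (fun A => (f A - M) ^ 2)
      = Ex p U (fun A => f A ^ 2) - M ^ 2 := by
    have : (fun A => (f A - M) ^ 2) = fun A => (f A ^ 2 + (-2 * M) * f A) + M ^ 2 := by
      funext A; ring
    rw [this, Ex_add, Ex_add, Ex_smul, Ex_const, ← hM]; ring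
  have hMpos : 0 < M := hm.trans_le hmf
  have key : Ex p U (fun A => 1 - 4 / M ^ 2 * (f A - M) ^ 2) ≤
      Ex p U (fun A => if m / 2 ≤ f A then 1 else 0) := by
    apply Ex_mono h0 h1
    intro A _
    split_ifs with h
    · have : 0 ≤ 4 / M ^ 2 * (f A - M) ^ 2 := by positivity
      linarith
    · have : M / 2 ≤ M - f A := by linarith
      have : (M / 2) ^ 2 ≤ (M - f A) ^ 2 := by gcongr
      have : 1 ≤ 4 / M ^ 2 * (f A - M) ^ 2 := by
        rw [div_mul_eq_mul_div, le_div_iff₀ (by positivity)]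
        nlinarith
      linarith
  rw [Ex_sub, Ex_const, Ex_smul, e] at key
  refine le_trans ?_ key
  have : 4 / M ^ 2 * (Ex p U (fun A => f A ^ 2) - M ^ 2) ≤ 4 / M ^ 2 * (K * M) := by gcongr
  have h3 : 4 / M ^ 2 * (K * M) = 4 * K / M := by field_simp
  have h4 : 4 * K / M ≤ 4 * K / m := by gcongr
  linarith

end

section
variable {V : Type*} [DecidableEq V]

/-- Edges of the complete graph on `s`. -/
def KE (s : Finset V) : Finset (Sym2 V) := s.offDiag.image Sym2.mk.uncurry

lemma mem_KE {s : Finset V} {u v : V} : s(u, v) ∈ KE s ↔ u ∈ s ∧ v ∈ s ∧ u ≠ v := by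
  unfold KE
  simp only [Finset.mem_image, Finset.mem_offDiag, Prod.exists, Function.uncurry_apply_pair,
    Sym2.eq_iff]
  constructor
  · rintro ⟨a, b, ⟨ha, hb, hab⟩, (⟨rfl, rfl⟩ | ⟨rfl, rfl⟩)⟩
    · exact ⟨ha, hb, hab⟩
    · exact ⟨hb, ha, hab.symm⟩
  · rintro ⟨ha, hb, hab⟩
    exact ⟨u, v, ⟨ha, hb, hab⟩, Or.inl ⟨rfl, rfl⟩⟩

lemma card_KE (s : Finset V) : (KE s).card = s.card.choose 2 := Sym2.card_image_offDiag s

lemma KE_inter (s t : Finset V) : KE s ∩ KE t = KE (s ∩ t) := by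
  ext e
  induction e using Sym2.ind with
  | _ u v => simp only [Finset.mem_inter, mem_KE]; tauto

lemma card_KE_union {s t : Finset V} (hs : s.card = 4) (ht : t.card = 4) :
    (KE s ∪ KE t).card = 12 - (t ∩ s).card.choose 2 := by
  have h := Finset.card_union_add_card_inter (KE s) (KE t)
  rw [KE_inter, card_KE, card_KE, card_KE, hs, ht, Finset.inter_comm s t] at h
  have : Nat.choose 4 2 = 6 := rfl
  omega

/-- Being a packing of `K₄`s in edge set `A`. -/
def IsPack (A : Finset (Sym2 V)) (S : Finset (Finset V)) : Prop :=
  (S : Set (Finset V)).Pairwise (fun s t => Disjoint s t) ∧ ∀ s ∈ S, s.card = 4 ∧ KE s ⊆ A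

variable [Fintype V]

open Classical in
/-- maximum packing size -/
noncomputable def pk (A : Finset (Sym2 V)) : ℕ :=
  (Finset.univ.filter (fun S : Finset (Finset V) => IsPack A S)).sup Finset.card

lemma le_pk {A : Finset (Sym2 V)} {S : Finset (Finset V)} (h : IsPack A S) : S.card ≤ pk A := by
  classical
  unfold pk
  apply Finset.le_sup (f := Finset.card)
  simpa using h

lemma exists_pk (A : Finset (Sym2 V)) : ∃ S, IsPack A S ∧ S.card = pk A := by
  classical
  have hne : (Finset.univ.filter (fun S : Finset (Finset V) => IsPack A S)).Nonempty :=
    ⟨∅, Finset.mem_filter.2 ⟨Finset.mem_univ _, by simp [IsPack]⟩⟩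
  obtain ⟨S, hS, h⟩ := Finset.exists_mem_eq_sup _ hne Finset.card
  refine ⟨S, by simpa using hS, ?_⟩
  rw [pk, h]

lemma pk_mono : Monotone (pk (V := V)) := by
  intro A B h
  obtain ⟨S, hS, e⟩ := exists_pk A
  rw [← e]
  exact le_pk ⟨hS.1, fun s hs => ⟨(hS.2 s hs).1, (hS.2 s hs).2.trans h⟩⟩

lemma pk_self_bound (U A : Finset (Sym2 V)) :
    ∑ e ∈ U, (if e ∈ A then ((pk A : ℝ) - pk (A.erase e)) ^ 2 else 0) ≤ 6 * (pk A : ℝ) := by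
  obtain ⟨S, hS, hc⟩ := exists_pk A
  set W := S.biUnion KE with hW
  have hWc : W.card ≤ 6 * pk A := by
    calc W.card ≤ ∑ s ∈ S, (KE s).card := Finset.card_biUnion_le
      _ = ∑ s ∈ S, 6 := by
        apply Finset.sum_congr rfl
        intro s hs
        rw [card_KE, (hS.2 s hs).1]; rfl
      _ = 6 * pk A := by rw [Finset.sum_const, hc, smul_eq_mul, mul_comm]
  have hterm : ∀ e ∈ U, (if e ∈ A then ((pk A : ℝ) - pk (A.erase e)) ^ 2 else 0)
      ≤ if e ∈ W then (1 : ℝ) else 0 := by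
    intro e _
    have hle : pk (A.erase e) ≤ pk A := pk_mono (Finset.erase_subset e A)
    have hle' : (pk (A.erase e) : ℝ) ≤ pk A := by exact_mod_cast hle
    by_cases heW : e ∈ W
    · rw [if_pos heW]
      obtain ⟨s, hs, hes⟩ := Finset.mem_biUnion.1 heW
      have hp : IsPack (A.erase e) (S.erase s) := by
        refine ⟨fun a ha b hb hab => hS.1 (Finset.mem_of_mem_erase ha)
          (Finset.mem_of_mem_erase hb) hab, ?_⟩
        intro t ht
        have htS := Finset.mem_of_mem_erase ht
        have hts := Finset.ne_of_mem_erase ht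
        refine ⟨(hS.2 t htS).1, ?_⟩
        intro x hx
        refine Finset.mem_erase.2 ⟨?_, (hS.2 t htS).2 hx⟩
        rintro rfl
        have hd : Disjoint t s := hS.1 htS hs hts
        have : x ∈ KE t ∩ KE s := Finset.mem_inter.2 ⟨hx, hes⟩
        rw [KE_inter, Finset.disjoint_iff_inter_eq_empty.1 hd] at this
        simp [KE] at this
      have h1 := le_pk hp
      rw [Finset.card_erase_of_mem hs, hc] at h1
      have h2 : (pk A : ℝ) ≤ pk (A.erase e) + 1 := by
        have : pk A ≤ pk (A.erase e) + 1 := by omega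
        exact_mod_cast this
      split_ifs
      · nlinarith
      · norm_num
    · rw [if_neg heW]
      have hp : IsPack (A.erase e) S := by
        refine ⟨hS.1, fun t ht => ⟨(hS.2 t ht).1, ?_⟩⟩
        intro x hx
        refine Finset.mem_erase.2 ⟨?_, (hS.2 t ht).2 hx⟩
        rintro rfl
        exact heW (Finset.mem_biUnion.2 ⟨t, ht, hx⟩)
      have h1 := le_pk hp
      rw [hc] at h1
      have : pk (A.erase e) = pk A := le_antisymm hle h1
      simp [this]
  calc _ ≤ ∑ e ∈ U, (if e ∈ W then (1 : ℝ) else 0) := Finset.sum_le_sum hterm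
    _ = ((U.filter (· ∈ W)).card : ℝ) := by rw [Finset.sum_boole]
    _ ≤ (W.card : ℝ) := by
      norm_cast
      apply Finset.card_le_card
      intro x hx
      exact (Finset.mem_filter.1 hx).2
    _ ≤ _ := by exact_mod_cast hWc

/-- The 4-sets conflicting with `s`. -/
def conf (s : Finset V) : Finset (Finset V) :=
  (Finset.powersetCard 4 Finset.univ).filter (fun t => t ≠ s ∧ ¬ Disjoint t s)

lemma pk_lower (A : Finset (Sym2 V)) :
    (∑ s ∈ Finset.powersetCard 4 (Finset.univ : Finset V), if KE s ⊆ A then (1 : ℝ) else 0)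
    - ∑ s ∈ Finset.powersetCard 4 (Finset.univ : Finset V), ∑ t ∈ conf s,
        (if KE s ∪ KE t ⊆ A then (1 : ℝ) else 0) ≤ (pk A : ℝ) := by
  classical
  set T := (Finset.powersetCard 4 (Finset.univ : Finset V)).filter (fun s => KE s ⊆ A) with hT
  set S := T.filter (fun s => ∀ t ∈ T, t ≠ s → Disjoint t s) with hS
  have hp : IsPack A S := by
    constructor
    · intro s hs t ht hst
      have hs' := (Finset.mem_filter.1 (Finset.mem_coe.1 hs)).1
      exact (Finset.mem_filter.1 (Finset.mem_coe.1 ht)).2 s hs' hst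
    · intro s hs
      have h := Finset.mem_filter.1 (Finset.mem_filter.1 hs).1
      exact ⟨(Finset.mem_powersetCard.1 h.1).2, h.2⟩
  have h1 : (S.card : ℝ) ≤ pk A := by exact_mod_cast le_pk hp
  refine le_trans ?_ h1
  have h2 : (S.card : ℝ) = ∑ s ∈ Finset.powersetCard 4 (Finset.univ : Finset V),
      if s ∈ S then (1 : ℝ) else 0 := by
    rw [Finset.sum_ite_mem, Finset.inter_eq_right.2]
    · simp
    · exact (Finset.filter_subset _ _).trans (Finset.filter_subset _ _)
  rw [h2, ← Finset.sum_sub_distrib]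
  apply Finset.sum_le_sum
  intro s hs
  have hnn : ∀ t ∈ conf s, 0 ≤ (if KE s ∪ KE t ⊆ A then (1 : ℝ) else 0) := by
    intro t _; split_ifs <;> norm_num
  have hsum := Finset.sum_nonneg hnn
  by_cases hsA : KE s ⊆ A
  · have hsT : s ∈ T := Finset.mem_filter.2 ⟨hs, hsA⟩
    by_cases hsS : s ∈ S
    · rw [if_pos hsA, if_pos hsS]; linarith
    · rw [if_pos hsA, if_neg hsS]
      have : ∃ t ∈ T, t ≠ s ∧ ¬ Disjoint t s := by
        by_contra hcon
        push Not at hcon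
        exact hsS (Finset.mem_filter.2 ⟨hsT, hcon⟩)
      obtain ⟨t, htT, hts, hd⟩ := this
      have htT' := Finset.mem_filter.1 htT
      have htc : t ∈ conf s := Finset.mem_filter.2 ⟨htT'.1, hts, hd⟩
      have := Finset.single_le_sum hnn htc
      rw [if_pos (Finset.union_subset hsA htT'.2)] at this
      linarith
  · have hsS : s ∉ S := fun h => hsA (Finset.mem_filter.1 (Finset.mem_filter.1 h).1).2
    rw [if_neg hsA, if_neg hsS]; linarith

lemma conf_sum {p η : ℝ} (h0 : 0 ≤ p) {s : Finset V} (hs : s.card = 4)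
    (hη : 0 ≤ η)
    (e1 : (Fintype.card V : ℝ) ^ 3 * p ^ 6 ≤ η) (e2 : (Fintype.card V : ℝ) ^ 2 * p ^ 5 ≤ η)
    (e3 : (Fintype.card V : ℝ) * p ^ 3 ≤ η) :
    ∑ t ∈ conf s, p ^ (KE s ∪ KE t).card ≤ p ^ 6 * (16 * η) := by
  have hmap : ∀ t ∈ conf s, t ∩ s ∈ s.powerset := fun t _ =>
    Finset.mem_powerset.2 Finset.inter_subset_right
  rw [← Finset.sum_fiberwise_of_maps_to hmap]
  have hr : ∀ r ∈ s.powerset, ∑ t ∈ (conf s).filter (fun t => t ∩ s = r),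
      p ^ (KE s ∪ KE t).card ≤ p ^ 6 * η := by
    intro r hr
    have hcard : ((conf s).filter (fun t => t ∩ s = r)).card ≤ Fintype.card V ^ (4 - r.card) := by
      calc _ ≤ (Finset.powersetCard (4 - r.card) (Finset.univ : Finset V)).card := by
            apply Finset.card_le_card_of_injOn (fun t => t \ s)
            · intro t ht
              have ht' := Finset.mem_filter.1 (Finset.mem_coe.1 ht)
              have ht4 := (Finset.mem_powersetCard.1 (Finset.mem_filter.1 ht'.1).1).2
              apply Finset.mem_coe.2
              refine Finset.mem_powersetCard.2 ⟨Finset.subset_univ _, ?_⟩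
              have := Finset.card_sdiff_add_card_inter t s
              rw [ht'.2, ht4] at this
              simp only
              omega
            · intro t ht t' ht' h
              have a := (Finset.mem_filter.1 (Finset.mem_coe.1 ht)).2
              have b := (Finset.mem_filter.1 (Finset.mem_coe.1 ht')).2
              simp only at h
              rw [← Finset.sdiff_union_inter t s, ← Finset.sdiff_union_inter t' s, a, b, h]
        _ ≤ _ := by
          rw [Finset.card_powersetCard, Finset.card_univ]
          exact Nat.choose_le_pow _ _
    have hsum : ∑ t ∈ (conf s).filter (fun t => t ∩ s = r), p ^ (KE s ∪ KE t).card
        = ((conf s).filter (fun t => t ∩ s = r)).card * p ^ (12 - r.card.choose 2) := by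
      rw [← nsmul_eq_mul, ← Finset.sum_const]
      apply Finset.sum_congr rfl
      intro t ht
      have ht' := Finset.mem_filter.1 ht
      have ht4 := (Finset.mem_powersetCard.1 (Finset.mem_filter.1 ht'.1).1).2
      rw [card_KE_union hs ht4, ht'.2]
    rcases Finset.eq_empty_or_nonempty ((conf s).filter (fun t => t ∩ s = r)) with he | ⟨t, ht⟩
    · rw [he, Finset.sum_empty]; positivity
    rw [hsum]
    have ht' := Finset.mem_filter.1 ht
    have htc := Finset.mem_filter.1 ht'.1
    have ht4 := (Finset.mem_powersetCard.1 htc.1).2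
    have hr1 : 1 ≤ r.card := by
      rw [← ht'.2, Nat.one_le_iff_ne_zero, Ne, Finset.card_eq_zero]
      exact fun h => htc.2.2 (Finset.disjoint_iff_inter_eq_empty.2 h)
    have hr3 : r.card ≤ 3 := by
      by_contra hcon
      have h4 : 4 ≤ (t ∩ s).card := by rw [ht'.2]; omega
      have a := Finset.eq_of_subset_of_card_le (Finset.inter_subset_left : t ∩ s ⊆ t) (by omega)
      have b := Finset.eq_of_subset_of_card_le (Finset.inter_subset_right : t ∩ s ⊆ s) (by omega)
      exact htc.2.1 (a.symm.trans b)
    have hcard' : (((conf s).filter (fun t => t ∩ s = r)).card : ℝ)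
        ≤ (Fintype.card V : ℝ) ^ (4 - r.card) := by exact_mod_cast hcard
    refine (mul_le_mul_of_nonneg_right hcard' (by positivity)).trans ?_
    have h6 : 0 ≤ p ^ 6 := by positivity
    generalize r.card = k at hr1 hr3
    interval_cases k
    · have := mul_le_mul_of_nonneg_left e1 h6
      calc _ = p ^ 6 * ((Fintype.card V : ℝ) ^ 3 * p ^ 6) := by norm_num [Nat.choose]; ring
        _ ≤ _ := this
    · have := mul_le_mul_of_nonneg_left e2 h6
      calc _ = p ^ 6 * ((Fintype.card V : ℝ) ^ 2 * p ^ 5) := by norm_num [Nat.choose]; ring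
        _ ≤ _ := this
    · have := mul_le_mul_of_nonneg_left e3 h6
      calc _ = p ^ 6 * ((Fintype.card V : ℝ) * p ^ 3) := by norm_num [Nat.choose]; ring
        _ ≤ _ := this
  refine (Finset.sum_le_sum hr).trans ?_
  rw [Finset.sum_const, Finset.card_powerset, hs, nsmul_eq_mul]
  norm_num
  linarith

/-- The set of all possible edges. -/
def EU (V : Type*) [DecidableEq V] [Fintype V] : Finset (Sym2 V) := KE Finset.univ

lemma KE_sub_EU (s : Finset V) : KE s ⊆ EU V := by
  intro e
  induction e using Sym2.ind with
  | _ u v => simp only [EU, mem_KE]; simp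

lemma Ex_pk_lower {p : ℝ} (h0 : 0 ≤ p) (h1 : p ≤ 1)
    (e1 : (Fintype.card V : ℝ) ^ 3 * p ^ 6 ≤ 1 / 64)
    (e2 : (Fintype.card V : ℝ) ^ 2 * p ^ 5 ≤ 1 / 64)
    (e3 : (Fintype.card V : ℝ) * p ^ 3 ≤ 1 / 64) :
    ((Fintype.card V).choose 4 : ℝ) * p ^ 6 * (3 / 4) ≤ Ex p (EU V) (fun A => (pk A : ℝ)) := by
  refine le_trans ?_ (Ex_mono h0 h1 fun A _ => pk_lower A)
  rw [Ex_sub, Ex_sum, Ex_sum]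
  have a : ∑ s ∈ Finset.powersetCard 4 (Finset.univ : Finset V),
      Ex p (EU V) (fun A => if KE s ⊆ A then (1 : ℝ) else 0)
      = ((Fintype.card V).choose 4 : ℝ) * p ^ 6 := by
    rw [← Finset.card_univ (α := V), ← Finset.card_powersetCard, ← nsmul_eq_mul,
      ← Finset.sum_const]
    apply Finset.sum_congr rfl
    intro s hs
    rw [Ex_sub_indicator _ _ (KE_sub_EU s), card_KE, (Finset.mem_powersetCard.1 hs).2]
    rfl
  have b : ∑ s ∈ Finset.powersetCard 4 (Finset.univ : Finset V),
      Ex p (EU V) (fun A => ∑ t ∈ conf s, if KE s ∪ KE t ⊆ A then (1 : ℝ) else 0)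
      ≤ ((Fintype.card V).choose 4 : ℝ) * (p ^ 6 * (16 * (1 / 64))) := by
    rw [← Finset.card_univ (α := V), ← Finset.card_powersetCard, ← nsmul_eq_mul,
      ← Finset.sum_const]
    apply Finset.sum_le_sum
    intro s hs
    rw [Ex_sum]
    refine le_trans (le_of_eq ?_)
      (conf_sum h0 (Finset.mem_powersetCard.1 hs).2 (by norm_num) e1 e2 e3)
    apply Finset.sum_congr rfl
    intro t _
    exact Ex_sub_indicator _ _ (Finset.union_subset (KE_sub_EU s) (KE_sub_EU t))
  rw [a]
  linarith

end

open Classical in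
lemma probGnp_eq (n : ℕ) (p : ℝ) (Q : SimpleGraph (Fin n) → Prop) :
    probGnp n p Q = Ex p (EU (Fin n))
      (fun A => if Q (SimpleGraph.fromEdgeSet (A : Set (Sym2 (Fin n)))) then 1 else 0) := by
  unfold probGnp Ex
  have hU : (EU (Fin n)).card = n.choose 2 := by simp [EU, card_KE]
  symm
  apply Finset.sum_bij' (fun (A : Finset (Sym2 (Fin n))) _ => SimpleGraph.fromEdgeSet (A : Set (Sym2 (Fin n))))
    (fun G _ => G.edgeFinset)
  · intro A _; simp
  · intro G _
    rw [Finset.mem_powerset]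
    intro e
    induction e using Sym2.ind with
    | _ u v =>
      simp only [SimpleGraph.mem_edgeFinset, SimpleGraph.mem_edgeSet, EU, mem_KE]
      intro h
      simpa using h.ne
  · intro A hA
    have hA := Finset.mem_powerset.1 hA
    ext e
    have := @hA e
    induction e using Sym2.ind with
    | _ u v =>
      simp only [EU, mem_KE] at this
      simp
      simp at this
      exact this
  · intro G _; simp
  · intro A hA
    have hA := Finset.mem_powerset.1 hA
    have : (SimpleGraph.fromEdgeSet (A : Set (Sym2 (Fin n)))).edgeSet = A := by
      ext e
      have := @hA e
      induction e using Sym2.ind with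
      | _ u v =>
        simp only [EU, mem_KE] at this
        simp
        simp at this
        exact this
    rw [this, Set.ncard_coe_finset, hU]
    split_ifs <;> simp_all

open Classical in
lemma prob_lower (n : ℕ) {p q m : ℝ} (h0 : 0 ≤ q) (hqp : q ≤ p) (h1 : p ≤ 1)
    (e1 : (n : ℝ) ^ 3 * q ^ 6 ≤ 1 / 64)
    (e2 : (n : ℝ) ^ 2 * q ^ 5 ≤ 1 / 64)
    (e3 : (n : ℝ) * q ^ 3 ≤ 1 / 64) (hm : 0 < m)
    (hmn : m ≤ (n.choose 4 : ℝ) * q ^ 6 * (3 / 4)) :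
    1 - 24 / m ≤ probGnp n p (fun G => ∃ S : Finset (Finset (Fin n)),
            (S : Set (Finset (Fin n))).Pairwise (fun s t => Disjoint s t) ∧
            (∀ s ∈ S, s.card = 4 ∧ ∀ u ∈ s, ∀ v ∈ s, u ≠ v → G.Adj u v) ∧
            m / 2 ≤ (S.card : ℝ)) := by
  have l1 := Ex_pk_lower (V := Fin n) h0 (hqp.trans h1) (by simpa using e1) (by simpa using e2)
    (by simpa using e3)
  rw [Fintype.card_fin] at l1
  have l2 := Ex_mono_p h0 hqp h1 (EU (Fin n)) (fun A => (pk A : ℝ))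
    (fun A B h => by simpa using pk_mono h)
  have l3 := chebyshev (h0.trans hqp) h1 (EU (Fin n)) (fun A => (pk A : ℝ)) 6 m (by norm_num) hm
    (hmn.trans (l1.trans l2)) (fun A _ => pk_self_bound _ A)
  rw [probGnp_eq]
  have : (4 * 6 / m : ℝ) = 24 / m := by norm_num
  rw [this] at l3
  refine l3.trans (Ex_mono (h0.trans hqp) h1 ?_)
  intro A _
  split_ifs with ha hb hb
  · exact le_rfl
  · exfalso
    apply hb
    obtain ⟨S, hS, hc⟩ := exists_pk A
    refine ⟨S, hS.1, fun s hs => ⟨(hS.2 s hs).1, ?_⟩, by rw [hc]; exact ha⟩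
    intro u hu v hv huv
    rw [SimpleGraph.fromEdgeSet_adj]
    exact ⟨(hS.2 s hs).2 (mem_KE.2 ⟨hu, hv, huv⟩), huv⟩
  · norm_num
  · exact le_rfl

lemma prob_le_one (n : ℕ) {p : ℝ} (h0 : 0 ≤ p) (h1 : p ≤ 1) (Q : SimpleGraph (Fin n) → Prop) :
    probGnp n p Q ≤ 1 := by
  classical
  rw [probGnp_eq]
  refine (Ex_mono h0 h1 (g := fun _ => 1) ?_).trans (le_of_eq ?_)
  · intro A _
    split_ifs <;> norm_num
  · simp [Ex_const]

end K4Pack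

open Filter in
/-- There is an absolute constant `c > 0` such that for every `0 < δ ≤ 1/6`, if
`p = p(n) ≥ n^{δ-2/3}`, then a.a.s. `G(n,p)` contains at least `c·n^{6δ}`
pairwise vertex-disjoint copies of `K₄`. -/
theorem stmt11 :
    ∃ c : ℝ, 0 < c ∧ ∀ δ : ℝ, 0 < δ → δ ≤ 1 / 6 →
      ∀ p : ℕ → ℝ, (∀ n, 0 ≤ p n ∧ p n ≤ 1) →
        (∀ n : ℕ, (n : ℝ) ^ (δ - 2 / 3) ≤ p n) →
        Tendsto (fun n : ℕ => probGnp n (p n)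
          (fun G => ∃ S : Finset (Finset (Fin n)),
            (S : Set (Finset (Fin n))).Pairwise (fun s t => Disjoint s t) ∧
            (∀ s ∈ S, s.card = 4 ∧ ∀ u ∈ s, ∀ v ∈ s, u ≠ v → G.Adj u v) ∧
            c * (n : ℝ) ^ (6 * δ) ≤ (S.card : ℝ)))
          atTop (nhds 1) := by
  refine ⟨1 / 2 ^ 22, by positivity, ?_⟩
  intro δ hδ hδ6 p hp hpn
  have hlim : Tendsto (fun n : ℕ => 1 - 24 / ((n : ℝ) ^ (6 * δ) / 2 ^ 21)) atTop (nhds 1) := by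
    have h1 : Tendsto (fun n : ℕ => (n : ℝ) ^ (6 * δ)) atTop atTop :=
      (tendsto_rpow_atTop (by linarith)).comp tendsto_natCast_atTop_atTop
    have h2 := (h1.atTop_div_const (by positivity : (0 : ℝ) < 2 ^ 21)).const_div_atTop 24
    simpa using h2.const_sub 1
  refine tendsto_of_tendsto_of_tendsto_of_le_of_le' hlim tendsto_const_nhds ?_ ?_
  · filter_upwards [eventually_ge_atTop 6] with n hn
    have hn6 : (6 : ℝ) ≤ n := by exact_mod_cast hn
    have hn0 : (0 : ℝ) < n := by linarith
    set x : ℝ := (n : ℝ) ^ (δ - 2 / 3) with hx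
    set y : ℝ := (n : ℝ) ^ (-(1 / 2) : ℝ) with hy
    have hx0 : 0 < x := Real.rpow_pos_of_pos hn0 _
    have hxy : x ≤ y := Real.rpow_le_rpow_of_exponent_le (by linarith) (by linarith)
    have hy0 : 0 < y := Real.rpow_pos_of_pos hn0 _
    have hy1 : y ≤ 1 := Real.rpow_le_one_of_one_le_of_nonpos (by linarith) (by norm_num)
    have hyn : (n : ℝ) * y ^ 2 = 1 := by
      rw [hy, ← Real.rpow_natCast, ← Real.rpow_mul hn0.le]
      norm_num
      rw [Real.rpow_neg_one]
      field_simp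
    have hx6 : (n : ℝ) ^ 4 * x ^ 6 = (n : ℝ) ^ (6 * δ) := by
      rw [hx, ← Real.rpow_natCast, ← Real.rpow_natCast, ← Real.rpow_mul hn0.le,
        ← Real.rpow_add hn0]
      congr 1
      push_cast
      ring
    have hpos : 0 < (n : ℝ) ^ (6 * δ) := Real.rpow_pos_of_pos hn0 _
    have hch : (n : ℝ) ^ 4 / 384 ≤ (n.choose 4 : ℝ) := by
      have h := Nat.pow_le_choose (α := ℝ) 4 n
      have h3 : ((n + 1 - 4 : ℕ) : ℝ) = (n : ℝ) - 3 := by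
        rw [show n + 1 - 4 = n - 3 by omega, Nat.cast_sub (by omega)]; norm_num
      rw [h3] at h
      have h4 : ((n : ℝ) / 2) ^ 4 ≤ ((n : ℝ) - 3) ^ 4 :=
        pow_le_pow_left₀ (by positivity) (by linarith) 4
      have h5 : ((Nat.factorial 4 : ℕ) : ℝ) = 24 := by norm_num [Nat.factorial]
      rw [h5] at h
      nlinarith
    have key := K4Pack.prob_lower n (p := p n) (q := x / 4) (m := (n : ℝ) ^ (6 * δ) / 2 ^ 21)
      (by positivity) (by linarith [hpn n]) (hp n).2 ?_ ?_ ?_ (by positivity) ?_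
    · have e : ∀ z : ℝ, z / 2 ^ 21 / 2 = 1 / 2 ^ 22 * z := fun z => by ring
      rw [e] at key
      exact key
    · have : (n : ℝ) ^ 3 * x ^ 6 ≤ 1 := by
        calc (n : ℝ) ^ 3 * x ^ 6 ≤ (n : ℝ) ^ 3 * y ^ 6 := by gcongr
          _ = ((n : ℝ) * y ^ 2) ^ 3 := by ring
          _ = 1 := by rw [hyn]; norm_num
      rw [div_pow]; linarith
    · have : (n : ℝ) ^ 2 * x ^ 5 ≤ 1 := by
        calc (n : ℝ) ^ 2 * x ^ 5 ≤ (n : ℝ) ^ 2 * y ^ 5 := by gcongr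
          _ = ((n : ℝ) * y ^ 2) ^ 2 * y := by ring
          _ ≤ 1 := by rw [hyn]; linarith
      rw [div_pow]; linarith
    · have : (n : ℝ) * x ^ 3 ≤ 1 := by
        calc (n : ℝ) * x ^ 3 ≤ (n : ℝ) * y ^ 3 := by gcongr
          _ = ((n : ℝ) * y ^ 2) * y := by ring
          _ ≤ 1 := by rw [hyn]; linarith
      rw [div_pow]; linarith
    · rw [← hx6]
      calc (n : ℝ) ^ 4 * x ^ 6 / 2 ^ 21 = (n : ℝ) ^ 4 / 384 * (x / 4) ^ 6 * (3 / 4) := by ring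
        _ ≤ _ := by gcongr
  · exact Eventually.of_forall fun n => K4Pack.prob_le_one n (hp n).1 (hp n).2 _
end

section
/- If G is a graph on at least 2 vertices and T⃗ is an oriented tree with v(T⃗) ≤ χ(G)/⌈log₂ v(G)⌉, then G → T⃗. -/
/-- `X` is properly colourable with `c` colours (with respect to the arcs of `o`). -/
def ColX {V : Type*} (o : V → V → Prop) (X : Finset V) (c : ℕ) : Prop :=
  ∃ f : V → ℕ, (∀ v ∈ X, f v < c) ∧ ∀ u ∈ X, ∀ v ∈ X, o u v → f u ≠ f v

lemma ColX.union {V : Type*} [DecidableEq V] {o : V → V → Prop} {X Y : Finset V} {a b : ℕ}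
    (hX : ColX o X a) (hY : ColX o Y b) : ColX o (X ∪ Y) (a + b) := by
  obtain ⟨f, hf, hf'⟩ := hX
  obtain ⟨g, hg, hg'⟩ := hY
  refine ⟨fun v => if v ∈ X then f v else a + g v, ?_, ?_⟩
  · intro v hv
    by_cases h : v ∈ X
    · have := hf v h
      simp [h]; omega
    · have := hg v (by simpa [h] using hv)
      simp [h]; omega
  · intro u hu v hv huv
    by_cases h : u ∈ X <;> by_cases h2 : v ∈ X
    · simpa [h, h2] using hf' u h v h2 huv
    · have := hf u h
      simp [h, h2]; omega
    · have := hf v h2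
      simp [h, h2]; omega
    · simpa [h, h2] using hg' u (by simpa [h] using hu) v (by simpa [h2] using hv) huv

lemma ColX.mono {V : Type*} {o : V → V → Prop} {X : Finset V} {a b : ℕ}
    (hX : ColX o X a) (h : a ≤ b) : ColX o X b := by
  obtain ⟨f, hf, hf'⟩ := hX
  exact ⟨f, fun v hv => (hf v hv).trans_le h, hf'⟩

lemma ColX.flip {V : Type*} {o : V → V → Prop} {X : Finset V} {a : ℕ}
    (hX : ColX o X a) : ColX (fun u v => o v u) X a := by
  obtain ⟨f, hf, hf'⟩ := hX
  exact ⟨f, hf, fun u hu v hv h => (hf' v hv u hu h).symm⟩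

open Classical in
lemma exists_stable {V : Type*} (o : V → V → Prop) (ho : ∀ u v, o u v → ¬ o v u) :
    ∀ (n : ℕ) (X : Finset V), X.card = n → ∃ S U : Finset V, S ⊆ X ∧ U ⊆ X ∧ ColX o S 1 ∧
      2 * U.card ≤ X.card - 1 ∧ ∀ v ∈ X, v ∉ S → v ∉ U → ∃ s ∈ S, o v s := by
  intro n
  induction n using Nat.strong_induction_on with
  | _ n ih =>
  intro X hX
  rcases X.eq_empty_or_nonempty with rfl | hne
  · exact ⟨∅, ∅, by simp, by simp, ⟨fun _ => 0, by simp, by simp⟩, by simp, by simp⟩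
  obtain ⟨v, hv, hdeg⟩ : ∃ v ∈ X, (X.filter (fun w => o v w)).card ≤
      (X.filter (fun w => o w v)).card := by
    apply Finset.exists_le_of_sum_le hne
    exact (Finset.sum_card_bipartiteAbove_eq_sum_card_bipartiteBelow (s := X) (t := X) o).le
  set P := X.filter (fun w => o v w) with hP
  set N := X.filter (fun w => o w v) with hN
  set X' := X.filter (fun w => w ≠ v ∧ ¬ o v w ∧ ¬ o w v) with hX'
  have hvv : ¬ o v v := fun h => ho v v h h
  have hcard : X.card = X'.card + P.card + N.card + 1 := by
    have h1 : X = insert v (X' ∪ P ∪ N) := by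
      ext w
      simp only [hX', hP, hN, Finset.mem_insert, Finset.mem_union, Finset.mem_filter]
      by_cases hw : w = v
      · subst hw; simp [hv]
      · tauto
    have h2 : v ∉ X' ∪ P ∪ N := by simp [hX', hP, hN, hvv]
    have h3 : Disjoint X' P := by
      rw [Finset.disjoint_left]; intro w; simp only [hX', hP, Finset.mem_filter]; tauto
    have h4 : Disjoint (X' ∪ P) N := by
      rw [Finset.disjoint_left]; intro w
      simp only [hX', hP, hN, Finset.mem_filter, Finset.mem_union]
      have := ho v w
      tauto
    conv_lhs => rw [h1]
    rw [Finset.card_insert_of_notMem h2, Finset.card_union_of_disjoint h4,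
      Finset.card_union_of_disjoint h3]
  obtain ⟨S, U, hS, hU, ⟨f, hf, hf'⟩, hc, hd⟩ := ih X'.card (by omega) X' rfl
  refine ⟨insert v S, U ∪ P, ?_, ?_, ⟨fun _ => 0, by simp, ?_⟩, ?_, ?_⟩
  · exact Finset.insert_subset hv (hS.trans (Finset.filter_subset _ _))
  · exact Finset.union_subset (hU.trans (Finset.filter_subset _ _)) (Finset.filter_subset _ _)
  · intro a ha b hb hab
    exfalso
    rw [Finset.mem_insert] at ha hb
    rcases ha with rfl | ha <;> rcases hb with rfl | hb
    · exact hvv hab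
    · exact (Finset.mem_filter.1 (hS hb)).2.2.1 hab
    · exact (Finset.mem_filter.1 (hS ha)).2.2.2 hab
    · have := hf' a ha b hb hab
      have := hf a ha
      have := hf b hb
      omega
  · have := Finset.card_union_le U P
    omega
  · intro w hw hwS hwU
    simp only [Finset.mem_insert, Finset.mem_union, not_or] at hwS hwU
    by_cases hwv : o w v
    · exact ⟨v, by simp, hwv⟩
    · have hwP : ¬ o v w := fun h => hwU.2 (Finset.mem_filter.2 ⟨hw, h⟩)
      obtain ⟨s, hs, h⟩ := hd w (Finset.mem_filter.2 ⟨hw, hwS.1, hwP, hwv⟩) hwS.2 hwU.1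
      exact ⟨s, by simp [hs], h⟩

/-- `X` has an `r`-colourable dominating subset. -/
def DomX {V : Type*} (o : V → V → Prop) (X : Finset V) (r : ℕ) : Prop :=
  ∃ S ⊆ X, ColX o S r ∧ ∀ v ∈ X, v ∉ S → ∃ s ∈ S, o v s

open Classical in
lemma dom_step {V : Type*} (o : V → V → Prop) (ho : ∀ u v, o u v → ¬ o v u) (r : ℕ)
    (h : ∀ X : Finset V, X.card < 2 ^ r → DomX o X r) (X : Finset V)
    (hX : X.card ≤ 2 ^ (r + 1)) : DomX o X (r + 1) := by
  obtain ⟨S, U, hS, hU, hc, hcard, hd⟩ := exists_stable o ho _ X rfl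
  have hpos : 0 < 2 ^ r := by positivity
  obtain ⟨S', hS', hc', hd'⟩ := h U (by rw [pow_succ] at hX; omega)
  refine ⟨S' ∪ S, Finset.union_subset (hS'.trans hU) hS, hc'.union hc, ?_⟩
  intro v hv hvS
  simp only [Finset.mem_union, not_or] at hvS
  by_cases hvU : v ∈ U
  · obtain ⟨s, hs, h⟩ := hd' v hvU hvS.1
    exact ⟨s, by simp [hs], h⟩
  · obtain ⟨s, hs, h⟩ := hd v hv hvS.2 hvU
    exact ⟨s, by simp [hs], h⟩

lemma dom_lt {V : Type*} (o : V → V → Prop) (ho : ∀ u v, o u v → ¬ o v u) (r : ℕ) :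
    ∀ X : Finset V, X.card < 2 ^ r → DomX o X r := by
  induction r with
  | zero =>
    intro X hX
    have : X = ∅ := by simpa using hX
    subst this
    exact ⟨∅, by simp, ⟨fun _ => 0, by simp, by simp⟩, by simp⟩
  | succ r ih => exact fun X hX => dom_step o ho r ih X hX.le

lemma dom_le {V : Type*} (o : V → V → Prop) (ho : ∀ u v, o u v → ¬ o v u) (r : ℕ) (hr : 1 ≤ r)
    (X : Finset V) (hX : X.card ≤ 2 ^ r) : DomX o X r := by
  obtain ⟨r, rfl⟩ := Nat.exists_eq_add_of_le' hr
  exact dom_step o ho r (dom_lt o ho r) X hX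

open Classical in
lemma embed {V : Type*} [Fintype V] (o : V → V → Prop) (ho : ∀ u v, o u v → ¬ o v u) (r : ℕ)
    (hr : 1 ≤ r) (hV : Fintype.card V ≤ 2 ^ r) (n : ℕ) :
    ∀ (γ : Type*) [Fintype γ] (T : γ → γ → Prop), (∀ a b, T a b → ¬ T b a) →
      (SimpleGraph.fromRel T).IsTree → Fintype.card γ = n + 1 →
      ∀ X : Finset V, ¬ ColX o X (n * r) →
      ∃ f : γ → V, Function.Injective f ∧ (∀ a, f a ∈ X) ∧ ∀ a b, T a b → o (f a) (f b) := by
  induction n with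
  | zero =>
    intro γ _ T hor _ hc X hX
    have hsub : Subsingleton γ := Fintype.card_le_one_iff_subsingleton.1 (by omega)
    have hne : X.Nonempty := by
      rw [Finset.nonempty_iff_ne_empty]
      rintro rfl
      exact hX ⟨fun _ => 0, by simp, by simp⟩
    obtain ⟨x, hx⟩ := hne
    refine ⟨fun _ => x, Function.injective_of_subsingleton _, fun _ => hx, ?_⟩
    intro a b hab
    obtain rfl := Subsingleton.elim a b
    exact absurd hab (hor _ _ hab)
  | succ n ih =>
    intro γ _ T hor htree hc X hX
    have hnt : Nontrivial γ := Fintype.one_lt_card_iff_nontrivial.1 (by omega)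
    obtain ⟨l, hl⟩ := htree.exists_vert_degree_one_of_nontrivial
    obtain ⟨p, hp, hpu⟩ := SimpleGraph.degree_eq_one_iff_existsUnique_adj.1 hl
    have hconn := htree.1.induce_compl_singleton_of_degree_eq_one hl
    have hac := htree.2.induce ({l}ᶜ : Set γ)
    -- extension step, for either direction
    have key : ∀ S ⊆ X, ColX o S r →
        ∃ f : ({l}ᶜ : Set γ) → V, Function.Injective f ∧ (∀ a, f a ∈ X \ S) ∧
          ∀ a b : ({l}ᶜ : Set γ), T a b → o (f a) (f b) := by
      intro S hS hcS
      refine ih ({l}ᶜ : Set γ) (fun a b => T a b) (fun a b => hor a b) ?_ ?_ (X \ S) ?_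
      · have : SimpleGraph.fromRel (fun a b : ({l}ᶜ : Set γ) => T a b) =
            (SimpleGraph.fromRel T).induce ({l}ᶜ : Set γ) := by
          ext a b
          simp [SimpleGraph.fromRel_adj, Subtype.ext_iff]
        rw [this]
        exact ⟨hconn, hac⟩
      · rw [Fintype.card_compl_set]; simp [hc]
      · intro hcol
        apply hX
        have := hcol.union hcS
        rw [Finset.sdiff_union_of_subset hS] at this
        exact this.mono (by rw [Nat.succ_mul])
    have hpl : p ≠ l := hp.ne'
    have hadj : T l p ∨ T p l := ((SimpleGraph.fromRel_adj _ _ _).1 hp).2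
    have huniq : ∀ q, T l q ∨ T q l → q = p := by
      intro q hq
      apply hpu
      refine (SimpleGraph.fromRel_adj _ _ _).2 ⟨?_, hq⟩
      rintro rfl
      rcases hq with h | h <;> exact hor _ _ h h
    have fin : ∀ S ⊆ X, ∀ f : ({l}ᶜ : Set γ) → V, Function.Injective f → (∀ a, f a ∈ X \ S) →
        (∀ a b : ({l}ᶜ : Set γ), T a b → o (f a) (f b)) →
        (∃ s ∈ S, (T l p → o s (f ⟨p, hpl⟩)) ∧ (T p l → o (f ⟨p, hpl⟩) s)) →
        ∃ f : γ → V, Function.Injective f ∧ (∀ a, f a ∈ X) ∧ ∀ a b, T a b → o (f a) (f b) := by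
      rintro S hS f hf hfX hfo ⟨s, hs, h1, h2⟩
      refine ⟨fun a => if h : a = l then s else f ⟨a, h⟩, ?_, ?_, ?_⟩
      · intro a b hab
        by_cases ha : a = l <;> by_cases hb : b = l
        · rw [ha, hb]
        · simp only [ha, hb, dif_pos, dif_neg, not_false_iff] at hab
          exact absurd (hab ▸ hs) (Finset.mem_sdiff.1 (hfX _)).2
        · simp only [ha, hb, dif_pos, dif_neg, not_false_iff] at hab
          exact absurd (hab ▸ hs) (Finset.mem_sdiff.1 (hfX _)).2
        · simp only [ha, hb, dif_neg, not_false_iff] at hab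
          exact congrArg Subtype.val (hf hab)
      · intro a
        by_cases ha : a = l
        · simpa [ha] using hS hs
        · simpa [ha] using (Finset.mem_sdiff.1 (hfX ⟨a, ha⟩)).1
      · intro a b hab
        by_cases ha : a = l <;> by_cases hb : b = l
        · subst ha; subst hb; exact absurd hab (hor _ _ hab)
        · subst ha
          obtain rfl := huniq b (Or.inl hab)
          simpa [hb] using h1 hab
        · subst hb
          obtain rfl := huniq a (Or.inr hab)
          simpa [ha] using h2 hab
        · simpa [ha, hb] using hfo ⟨a, ha⟩ ⟨b, hb⟩ hab
    have hXc : X.card ≤ 2 ^ r := (Finset.card_le_univ X).trans hV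
    rcases hadj with h | h
    · obtain ⟨S, hS, hcS, hd⟩ := dom_le (fun u v => o v u) (fun u v h => ho v u h) r hr X hXc
      obtain ⟨f, hf, hfX, hfo⟩ := key S hS hcS.flip
      obtain ⟨hx, hx'⟩ := Finset.mem_sdiff.1 (hfX ⟨p, hpl⟩)
      obtain ⟨s, hs, hso⟩ := hd _ hx hx'
      exact fin S hS f hf hfX hfo ⟨s, hs, fun _ => hso, fun h' => absurd h' (hor _ _ h)⟩
    · obtain ⟨S, hS, hcS, hd⟩ := dom_le o ho r hr X hXc
      obtain ⟨f, hf, hfX, hfo⟩ := key S hS hcS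
      obtain ⟨hx, hx'⟩ := Finset.mem_sdiff.1 (hfX ⟨p, hpl⟩)
      obtain ⟨s, hs, hso⟩ := hd _ hx hx'
      exact fin S hS f hf hfX hfo ⟨s, hs, fun h' => absurd h' (hor _ _ h), fun _ => hso⟩

/-- If `G` is a graph on at least 2 vertices and `T⃗` is an oriented tree with
`v(T⃗) ≤ χ(G)/⌈log₂ v(G)⌉`, then `G → T⃗`. -/
theorem stmt12 {V : Type*} [Fintype V] (G : SimpleGraph V) (hV : 2 ≤ Fintype.card V)
    {γ : Type*} [Fintype γ] (T : γ → γ → Prop)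
    (hor : ∀ a b, T a b → ¬ T b a) (htree : (SimpleGraph.fromRel T).IsTree)
    (hsize : ((Fintype.card γ * Nat.clog 2 (Fintype.card V) : ℕ) : ℕ∞) ≤
      G.chromaticNumber) :
    Arrows G T := by
  intro o ⟨ho1, ho2⟩
  have hne : Nonempty γ := htree.1.nonempty
  have hpos : 0 < Fintype.card γ := Fintype.card_pos
  have ho : ∀ u v, o u v → ¬ o v u := fun u v h => (ho2 u v (ho1 u v h)).1 h
  have hr : 1 ≤ Nat.clog 2 (Fintype.card V) := Nat.clog_pos (by norm_num) hV
  obtain ⟨n, hn⟩ : ∃ n, Fintype.card γ = n + 1 := ⟨Fintype.card γ - 1, by omega⟩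
  have hnc : ¬ ColX o Finset.univ (n * Nat.clog 2 (Fintype.card V)) := by
    rintro ⟨f, hf, hf'⟩
    have hcol : G.Colorable (n * Nat.clog 2 (Fintype.card V)) := by
      refine ⟨SimpleGraph.Coloring.mk (fun v => ⟨f v, hf v (Finset.mem_univ v)⟩) ?_⟩
      intro u v huv heq
      have heq' : f u = f v := congrArg Fin.val heq
      by_cases h : o u v
      · exact hf' u (Finset.mem_univ _) v (Finset.mem_univ _) h heq'
      · have h' : o v u := by
          by_contra h2
          exact h ((ho2 u v huv).2 h2)
        exact hf' v (Finset.mem_univ _) u (Finset.mem_univ _) h' heq'.symm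
    have h := hsize.trans hcol.chromaticNumber_le
    rw [hn, Nat.cast_le, Nat.succ_mul] at h
    omega
  obtain ⟨f, hf, -, hfo⟩ := embed o ho _ hr (Nat.le_pow_clog (by norm_num) _) n γ T hor htree hn
    Finset.univ hnc
  exact ⟨f, hf, hfo⟩
end
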